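/- arXiv:2201.01844 — 6 statements merged into one kernel-verified Lean document; each statement's English description precedes it below -/
import Mathlib

section
/- There are universal constants C, c > 0 such that the following holds. For every ε ∈ (0,1) and every finite set D of n disks in the plane in general position, setting α = ⌈c·(ε^{-2} + 4·ln n)⌉, there exists a subgraph H of the intersection graph IG(D) with at most C·ε^{-4}·n·(1+log n)^2 edges such that: (i) for every point p ∈ ℝ² with depth_D(p) ≤ α, the induced subgraph of H on D⊓p = {d ∈ D : p ∈ d} is a complete graph; and (ii) for every point p ∈ ℝ² with depth_D(p) > α, the induced subgraph of H on D⊓p is an (ε/4)-connector. -/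
open Metric Set
open scoped Classical

noncomputable section

abbrev Plane : Type := EuclideanSpace ℝ (Fin 2)

/-- A disk is a closed ball of positive radius in the plane. -/
def IsDisk (d : Set Plane) : Prop :=
  ∃ (c : Plane) (r : ℝ), 0 < r ∧ d = Metric.closedBall c r

/-- The depth of a point `p` in a finite family `D` of disks:
the number of disks of `D` containing `p`. -/
def diskDepth (D : Finset (Set Plane)) (p : Plane) : ℕ :=
  {d : Set Plane | d ∈ D ∧ p ∈ d}.ncard

/-- General position: no two boundary circles are tangent (meet in exactly one
point), and no three boundary circles pass through a common point.  (All disks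
are automatically distinct, since `D` is a finite set of point sets.) -/
def GeneralPosition (D : Finset (Set Plane)) : Prop :=
  (∀ d₁ ∈ D, ∀ d₂ ∈ D, d₁ ≠ d₂ → ¬ ∃ p : Plane, frontier d₁ ∩ frontier d₂ = {p}) ∧
  (∀ d₁ ∈ D, ∀ d₂ ∈ D, ∀ d₃ ∈ D, d₁ ≠ d₂ → d₁ ≠ d₃ → d₂ ≠ d₃ →
      frontier d₁ ∩ frontier d₂ ∩ frontier d₃ = ∅)

/-- The intersection graph of a finite family of disks: two distinct disks are
adjacent iff they intersect. -/
def IG (D : Finset (Set Plane)) : SimpleGraph {d // d ∈ D} :=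
  SimpleGraph.fromRel (fun d₁ d₂ => (d₁.1 ∩ d₂.1).Nonempty)

/-- The ε-safe zone for disks `D` and attack set `B`: the set of points `p`
with `depth_{D∖B}(p) ≥ ε·depth_D(p)`. -/
def SafeZone (ε : ℝ) (D B : Finset (Set Plane)) : Set Plane :=
  {p | ε * (diskDepth D p : ℝ) ≤
        (({d : Set Plane | d ∈ D ∧ d ∉ B ∧ p ∈ d}).ncard : ℝ)}

/-- Two points are ε-safely connected if they lie in the same topological
connected component of the ε-safe zone. -/
def SafelyConnected (ε : ℝ) (D B : Finset (Set Plane)) (p q : Plane) : Prop :=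
  q ∈ connectedComponentIn (SafeZone ε D B) p

/-- The neighborhood of a set `S` of vertices in a graph `G`. -/
def Nbhd {V : Type*} (G : SimpleGraph V) (S : Set V) : Set V :=
  {x | ∃ y ∈ S, G.Adj x y}

/-- A graph on a finite vertex type `V` with `ν` vertices is an `ε`-connector
if every vertex set `S` with `|S| ≥ εν` has `|N(S)| > (1-ε)ν`. -/
def IsConnector {V : Type*} (ε : ℝ) (G : SimpleGraph V) : Prop :=
  ∀ S : Set V, ε * (Nat.card V : ℝ) ≤ (S.ncard : ℝ) →
    (1 - ε) * (Nat.card V : ℝ) < ((Nbhd G S).ncard : ℝ)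


def hgt {V : Type*} (X Y : V → ℝ) (p : V × V) (x : ℝ) : ℝ :=
  Y p.1 + (Y p.2 - Y p.1) / (X p.2 - X p.1) * (x - X p.1)

def slp {V : Type*} (X Y : V → ℝ) (p : V × V) : ℝ := (Y p.2 - Y p.1) / (X p.2 - X p.1)

lemma affine_sign (a b l r x0 x : ℝ) (h : ∀ z, l < z → z < r → a + b * z ≠ 0)
    (h0 : l ≤ x0) (h0' : x0 ≤ r) (h1 : l ≤ x) (h1' : x ≤ r) (hp : 0 < a + b * x0) :
    0 ≤ a + b * x := by
  by_contra hn
  push Not at hn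
  set z := (x * (a + b * x0) - x0 * (a + b * x)) / ((a + b * x0) - (a + b * x)) with hz
  have hd : 0 < (a + b * x0) - (a + b * x) := by linarith
  have hz' : z * ((a + b * x0) - (a + b * x)) = x * (a + b * x0) - x0 * (a + b * x) := by
    rw [hz]; exact div_mul_cancel₀ _ hd.ne'
  have hne : x ≠ x0 := by rintro rfl; linarith
  have hzero : a + b * z = 0 := by
    have : (a + b * z) * ((a + b * x0) - (a + b * x)) = 0 := by
      linear_combination b * hz'
    rcases mul_eq_zero.1 this with h | h
    · exact h
    · linarith
  refine h z ?_ ?_ hzero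
  · by_contra hc
    push Not at hc
    rcases lt_or_gt_of_ne hne with h2 | h2
    · nlinarith
    · nlinarith
  · by_contra hc
    push Not at hc
    rcases lt_or_gt_of_ne hne with h2 | h2
    · nlinarith
    · nlinarith

section core
variable {V : Type*} (W : Finset V) (X Y : V → ℝ) (E : Finset (V × V))

def NCa : Prop := ∀ p ∈ E, ∀ w ∈ W, w ≠ p.1 → w ≠ p.2 → X p.1 ≤ X w → X w ≤ X p.2 →
  hgt X Y p (X w) ≠ Y w
def NCb : Prop := ∀ p ∈ E, ∀ q ∈ E, p ≠ q → ∀ x, X p.1 < x → x < X p.2 → X q.1 < x → x < X q.2 →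
  hgt X Y p x ≠ hgt X Y q x

variable {W X Y E}

lemma hgt_ord (h2 : NCb X Y E) {p q : V × V} (hp : p ∈ E) (hq : q ∈ E) {x0 x : ℝ}
    (a1 : X p.1 ≤ x0) (a2 : x0 ≤ X p.2) (a3 : X q.1 ≤ x0) (a4 : x0 ≤ X q.2)
    (b1 : X p.1 ≤ x) (b2 : x ≤ X p.2) (b3 : X q.1 ≤ x) (b4 : x ≤ X q.2)
    (h : hgt X Y p x0 < hgt X Y q x0) : hgt X Y p x ≤ hgt X Y q x := by
  have hpq : p ≠ q := by rintro rfl; exact lt_irrefl _ h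
  have key := affine_sign
    ((Y q.1 - slp X Y q * X q.1) - (Y p.1 - slp X Y p * X p.1)) (slp X Y q - slp X Y p)
    (max (X p.1) (X q.1)) (min (X p.2) (X q.2)) x0 x ?_ (max_le a1 a3) (le_min a2 a4)
    (max_le b1 b3) (le_min b2 b4) ?_
  · unfold hgt; unfold slp at key; linarith
  · intro z hz1 hz2 hz
    rw [max_lt_iff] at hz1
    rw [lt_min_iff] at hz2
    apply h2 p hp q hq hpq z hz1.1 hz2.1 hz1.2 hz2.2
    unfold hgt; unfold slp at hz; linarith
  · unfold hgt at h; unfold slp; linarith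

lemma hgt_ord' (h2 : NCb X Y E) {p q : V × V} (hp : p ∈ E) (hq : q ∈ E) {x0 x : ℝ}
    (a1 : X p.1 ≤ x0) (a2 : x0 ≤ X p.2) (a3 : X q.1 ≤ x0) (a4 : x0 ≤ X q.2)
    (b1 : X p.1 < x) (b2 : x < X p.2) (b3 : X q.1 < x) (b4 : x < X q.2)
    (h : hgt X Y p x0 < hgt X Y q x0) : hgt X Y p x < hgt X Y q x := by
  have hpq : p ≠ q := by rintro rfl; exact lt_irrefl _ h
  exact lt_of_le_of_ne (hgt_ord h2 hp hq a1 a2 a3 a4 b1.le b2.le b3.le b4.le h)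
    (h2 p hp q hq hpq x b1 b2 b3 b4)

variable (W X Y E) in
structure Wedge (e e' : V × V) (w : V) : Prop where
  he : e ∈ E
  he' : e' ∈ E
  src : e'.1 = e.1
  sl : slp X Y e < slp X Y e'
  btw : ∀ f ∈ E, f.1 = e.1 → slp X Y e < slp X Y f → slp X Y e' ≤ slp X Y f
  hw : w ∈ W
  x1 : X e.1 < X w
  x2 : X w ≤ X e.2
  x3 : X w ≤ X e'.2
  y1 : hgt X Y e (X w) ≤ Y w
  y2 : Y w ≤ hgt X Y e' (X w)
  mn : ∀ a ∈ W, X e.1 < X a → X a < X w →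
    hgt X Y e (X a) ≤ Y a → Y a ≤ hgt X Y e' (X a) → False

lemma hgt_left (p : V × V) : hgt X Y p (X p.1) = Y p.1 := by simp [hgt]

lemma hgt_right {p : V × V} (h : X p.1 < X p.2) : hgt X Y p (X p.2) = Y p.2 := by
  have : X p.2 - X p.1 ≠ 0 := by linarith
  unfold hgt; field_simp; ring

lemma hgt_slp (p : V × V) (x : ℝ) : hgt X Y p x = Y p.1 + slp X Y p * (x - X p.1) := rfl

lemma slp_inj (h2 : NCb X Y E) (hE : ∀ p ∈ E, p.1 ∈ W ∧ p.2 ∈ W ∧ X p.1 < X p.2)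
    {p q : V × V} (hp : p ∈ E) (hq : q ∈ E) (h : p.1 = q.1) (hs : slp X Y p = slp X Y q) :
    p = q := by
  by_contra hne
  have hp' := (hE p hp).2.2
  have hq' := (hE q hq).2.2
  obtain ⟨x, hx1, hx2⟩ := exists_between (lt_min hp' (h ▸ hq' : X p.1 < X q.2))
  rw [lt_min_iff] at hx2
  refine h2 p hp q hq hne x hx1 hx2.1 (h ▸ hx1) hx2.2 ?_
  rw [hgt_slp, hgt_slp, h, hs]

lemma gap_empty (h1 : NCa W X Y E) (h2 : NCb X Y E)
    (hE : ∀ p ∈ E, p.1 ∈ W ∧ p.2 ∈ W ∧ X p.1 < X p.2)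
    {e e' : V × V} {w : V} (hw : Wedge W X Y E e e' w) {f : V × V} (hf : f ∈ E) {x : ℝ}
    (c1 : X e.1 < x) (c2 : X f.1 < x) (c3 : x < X w) (c4 : X w ≤ X f.2)
    (d1 : hgt X Y e x < hgt X Y f x) (d2 : hgt X Y f x < hgt X Y e' x) : False := by
  have s1 : X e'.1 = X e.1 := by rw [hw.src]
  have s2 : Y e'.1 = Y e.1 := by rw [hw.src]
  have x1 := hw.x1
  have x2 := hw.x2
  have x3 := hw.x3
  by_cases hfe : f.1 = e.1
  · have := hw.btw f hf hfe ?_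
    · rw [hgt_slp, hgt_slp, hfe, s1, s2] at d2
      nlinarith
    · rw [hgt_slp, hgt_slp, hfe] at d1
      nlinarith
  rcases lt_or_ge (X e.1) (X f.1) with h | h
  · refine hw.mn f.1 (hE f hf).1 h (by linarith) ?_ ?_
    · rw [← hgt_left (X := X) (Y := Y) f]
      apply hgt_ord h2 hw.he hf _ _ _ _ _ _ _ _ d1 <;> linarith
    · rw [← hgt_left (X := X) (Y := Y) f]
      apply hgt_ord h2 hf hw.he' _ _ _ _ _ _ _ _ d2 <;> linarith
  · have k1 : hgt X Y e (X e.1) ≤ hgt X Y f (X e.1) := by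
      apply hgt_ord h2 hw.he hf _ _ _ _ _ _ _ _ d1 <;> linarith
    have k2 : hgt X Y f (X e.1) ≤ hgt X Y e' (X e.1) := by
      apply hgt_ord h2 hf hw.he' _ _ _ _ _ _ _ _ d2 <;> linarith
    rw [← s1, hgt_left, s1, s2] at k2
    rw [hgt_left] at k1
    refine h1 f hf e.1 (hE e hw.he).1 (Ne.symm hfe) ?_ h (by linarith) (le_antisymm k2 k1)
    intro h; rw [← h] at c4; linarith

lemma typeA_aux (h1 : NCa W X Y E) (h2 : NCb X Y E)
    (hE : ∀ p ∈ E, p.1 ∈ W ∧ p.2 ∈ W ∧ X p.1 < X p.2)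
    {e e' g g' : V × V} {w : V} (hw : Wedge W X Y E e e' w) (hg : Wedge W X Y E g g' w)
    (he : Y w < hgt X Y e' (X w)) {x : ℝ} (c1 : X e.1 < x) (c2 : X g.1 < x) (c3 : x < X w)
    (hlt : hgt X Y e x < hgt X Y g x) : False := by
  have s1 : X e'.1 = X e.1 := by rw [hw.src]
  have x2 := hw.x2
  have x3 := hw.x3
  have x4 := hg.x2
  refine gap_empty h1 h2 hE hw hg.he c1 c2 c3 hg.x2 hlt ?_
  have : hgt X Y g (X w) < hgt X Y e' (X w) := lt_of_le_of_lt hg.y1 he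
  apply hgt_ord' h2 hg.he hw.he' _ _ _ _ _ _ _ _ this <;> linarith

lemma typeA (h1 : NCa W X Y E) (h2 : NCb X Y E)
    (hE : ∀ p ∈ E, p.1 ∈ W ∧ p.2 ∈ W ∧ X p.1 < X p.2)
    {e e' g g' : V × V} {w : V} (hw : Wedge W X Y E e e' w) (hg : Wedge W X Y E g g' w)
    (he : Y w < hgt X Y e' (X w)) (he2 : Y w < hgt X Y g' (X w)) : e = g := by
  by_contra hne
  obtain ⟨x, hx1, hx2⟩ := exists_between (max_lt hw.x1 hg.x1)
  rw [max_lt_iff] at hx1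
  have x2 := hw.x2
  have x4 := hg.x2
  rcases lt_or_gt_of_ne (h2 e hw.he g hg.he hne x hx1.1 (by linarith) hx1.2 (by linarith)) with h | h
  · exact typeA_aux h1 h2 hE hw hg he hx1.1 hx1.2 hx2 h
  · exact typeA_aux h1 h2 hE hg hw he2 hx1.2 hx1.1 hx2 h

lemma typeB_aux0 (h1 : NCa W X Y E) 
    {e e' : V × V} {w : V} (hw : Wedge W X Y E e e' w) 
    (he : Y w = hgt X Y e' (X w)) : hgt X Y e (X w) < Y w := by
  refine lt_of_le_of_ne hw.y1 ?_
  have s1 : X e'.1 = X e.1 := by rw [hw.src]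
  have s2 : Y e'.1 = Y e.1 := by rw [hw.src]
  have := hw.x1
  have := hw.sl
  rw [he, hgt_slp, hgt_slp, s1, s2]
  intro h
  nlinarith

lemma typeB_aux (h1 : NCa W X Y E) (h2 : NCb X Y E)
    (hE : ∀ p ∈ E, p.1 ∈ W ∧ p.2 ∈ W ∧ X p.1 < X p.2)
    {e e' g g' : V × V} {w : V} (hw : Wedge W X Y E e e' w) (hg : Wedge W X Y E g g' w)
    (he : Y w = hgt X Y e' (X w)) (he2 : Y w = hgt X Y g' (X w))
    {x : ℝ} (c1 : X e.1 < x) (c2 : X g.1 < x) (c3 : x < X w)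
    (hlt : hgt X Y e' x < hgt X Y g' x) : False := by
  have s1 : X e'.1 = X e.1 := by rw [hw.src]
  have x2 := hw.x2
  have x3 := hw.x3
  have x4 := hg.x2
  refine gap_empty h1 h2 hE hg hw.he' c2 (by linarith) c3 hw.x3 ?_ hlt
  have : hgt X Y g (X w) < hgt X Y e' (X w) := he ▸ typeB_aux0 h1 hg he2
  apply hgt_ord' h2 hg.he hw.he' _ _ _ _ _ _ _ _ this <;> linarith

lemma typeB (h1 : NCa W X Y E) (h2 : NCb X Y E)
    (hE : ∀ p ∈ E, p.1 ∈ W ∧ p.2 ∈ W ∧ X p.1 < X p.2)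
    {e e' g g' : V × V} {w : V} (hw : Wedge W X Y E e e' w) (hg : Wedge W X Y E g g' w)
    (he : Y w = hgt X Y e' (X w)) (he2 : Y w = hgt X Y g' (X w)) : e = g := by
  have hee : e' = g' := by
    by_contra hne
    obtain ⟨x, hx1, hx2⟩ := exists_between (max_lt hw.x1 hg.x1)
    rw [max_lt_iff] at hx1
    have s1 : X e'.1 = X e.1 := by rw [hw.src]
    have s2 : X g'.1 = X g.1 := by rw [hg.src]
    have x2 := hw.x3
    have x4 := hg.x3
    rcases lt_or_gt_of_ne (h2 e' hw.he' g' hg.he' hne x (by linarith) (by linarith) (by linarith)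
      (by linarith)) with h | h
    · exact typeB_aux h1 h2 hE hw hg he he2 hx1.1 hx1.2 hx2 h
    · exact typeB_aux h1 h2 hE hg hw he2 he hx1.2 hx1.1 hx2 h
  subst hee
  have hs : e.1 = g.1 := by rw [← hw.src, hg.src]
  apply slp_inj h2 hE hw.he hg.he hs
  by_contra hne
  rcases lt_or_gt_of_ne hne with h | h
  · have := hw.btw g hg.he hs.symm h
    have := hg.sl
    linarith
  · have := hg.btw e hw.he hs h
    have := hw.sl
    linarith

lemma wedge_exists (hE : ∀ p ∈ E, p.1 ∈ W ∧ p.2 ∈ W ∧ X p.1 < X p.2) {e : V × V} (he : e ∈ E)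
    (hnt : ∃ f ∈ E, f.1 = e.1 ∧ slp X Y e < slp X Y f) : ∃ e' w, Wedge W X Y E e e' w := by
  obtain ⟨e', he', hmin⟩ := Finset.exists_min_image
    (E.filter fun f => f.1 = e.1 ∧ slp X Y e < slp X Y f) (slp X Y)
    (by obtain ⟨f, hf, h⟩ := hnt; exact ⟨f, by simp [hf, h]⟩)
  simp only [Finset.mem_filter] at he' hmin
  obtain ⟨he'E, hsrc, hsl⟩ := he'
  have s1 : X e'.1 = X e.1 := by rw [hsrc]
  have s2 : Y e'.1 = Y e.1 := by rw [hsrc]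
  have hle : ∀ x, X e.1 ≤ x → hgt X Y e x ≤ hgt X Y e' x := by
    intro x hx
    rw [hgt_slp, hgt_slp, s1, s2]; nlinarith
  have hx := (hE e he).2.2
  have hx' := (hE e' he'E).2.2
  obtain ⟨w, hw, hwm⟩ := Finset.exists_min_image
    (W.filter fun w => X e.1 < X w ∧ X w ≤ X e.2 ∧ X w ≤ X e'.2 ∧
      hgt X Y e (X w) ≤ Y w ∧ Y w ≤ hgt X Y e' (X w)) X (by
      rcases le_total (X e.2) (X e'.2) with h | h
      · refine ⟨e.2, ?_⟩
        simp only [Finset.mem_filter]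
        refine ⟨(hE e he).2.1, hx, le_rfl, h, (hgt_right hx).le, ?_⟩
        exact (hgt_right hx).ge.trans (hle _ hx.le)
      · refine ⟨e'.2, ?_⟩
        simp only [Finset.mem_filter]
        refine ⟨(hE e' he'E).2.1, s1 ▸ hx', h, le_rfl, ?_, (hgt_right hx').ge⟩
        exact (hle _ (s1 ▸ hx').le).trans (hgt_right hx').le)
  simp only [Finset.mem_filter] at hw hwm
  obtain ⟨a1, a2, a3, a4, a5, a6⟩ := hw
  refine ⟨e', w, he, he'E, hsrc, hsl, fun f hf h h' => hmin f ⟨hf, h, h'⟩, a1, a2, a3, a4, a5, a6, ?_⟩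
  intro a ha b1 b2 b3 b4
  have := hwm a ⟨ha, b1, by linarith, by linarith, b3, b4⟩
  linarith

lemma planar_core (h1 : NCa W X Y E) (h2 : NCb X Y E)
    (hE : ∀ p ∈ E, p.1 ∈ W ∧ p.2 ∈ W ∧ X p.1 < X p.2) : E.card ≤ 3 * W.card := by
  let T : V × V → Prop := fun e => ∃ f ∈ E, f.1 = e.1 ∧ slp X Y e < slp X Y f
  have key : ∀ e : V × V, ∃ (e' : V × V) (w : V), e ∈ E → T e → Wedge W X Y E e e' w := by
    intro e
    by_cases h : e ∈ E ∧ T e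
    · obtain ⟨a, b, h⟩ := wedge_exists hE h.1 h.2
      exact ⟨a, b, fun _ _ => h⟩
    · exact ⟨e, e.1, fun h1 h2 => absurd ⟨h1, h2⟩ h⟩
  choose n w hn using key
  have e1 := Finset.card_filter_add_card_filter_not (s := E) T
  have e2 := Finset.card_filter_add_card_filter_not (s := E.filter T)
    (fun e => Y (w e) < hgt X Y (n e) (X (w e)))
  have k1 : (E.filter fun e => ¬ T e).card ≤ W.card := by
    apply Finset.card_le_card_of_injOn Prod.fst
    · intro e he
      simp only [Finset.coe_filter, Set.mem_ofPred_eq] at he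
      exact (hE e he.1).1
    · intro e he f hf h
      simp only [Finset.coe_filter, Set.mem_ofPred_eq] at he hf
      apply slp_inj h2 hE he.1 hf.1 h
      apply le_antisymm
      · by_contra hc
        push Not at hc
        exact hf.2 ⟨e, he.1, h, hc⟩
      · by_contra hc
        push Not at hc
        exact he.2 ⟨f, hf.1, h.symm, hc⟩
  have k2 : ((E.filter T).filter (fun e => Y (w e) < hgt X Y (n e) (X (w e)))).card ≤ W.card := by
    apply Finset.card_le_card_of_injOn w
    · intro e he
      simp only [Finset.coe_filter, Finset.mem_filter, Set.mem_ofPred_eq] at he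
      exact (hn e he.1.1 he.1.2).hw
    · intro e he f hf h
      simp only [Finset.coe_filter, Finset.mem_filter, Set.mem_ofPred_eq] at he hf
      have a := hn e he.1.1 he.1.2
      have b := hn f hf.1.1 hf.1.2
      have c := hf.2
      rw [← h] at b c
      exact typeA h1 h2 hE a b he.2 c
  have k3 : ((E.filter T).filter (fun e => ¬ Y (w e) < hgt X Y (n e) (X (w e)))).card ≤ W.card := by
    apply Finset.card_le_card_of_injOn w
    · intro e he
      simp only [Finset.coe_filter, Finset.mem_filter, Set.mem_ofPred_eq] at he
      exact (hn e he.1.1 he.1.2).hw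
    · intro e he f hf h
      simp only [Finset.coe_filter, Finset.mem_filter, Set.mem_ofPred_eq] at he hf
      have a := hn e he.1.1 he.1.2
      have b := hn f hf.1.1 hf.1.2
      have c := hf.2
      rw [← h] at b c
      exact typeB h1 h2 hE a b (le_antisymm a.y2 (not_lt.1 he.2)) (le_antisymm b.y2 (not_lt.1 c))
  omega
end core


def NoCross {V : Type*} (x y : V → ℝ) (S : Finset (V × V)) : Prop :=
  ∀ p ∈ S, ∀ q ∈ S, p.1 ≠ q.1 → p.1 ≠ q.2 → p.2 ≠ q.1 → p.2 ≠ q.2 →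
    ∀ s t : ℝ, 0 ≤ s → s ≤ 1 → 0 ≤ t → t ≤ 1 →
      x p.1 + s * (x p.2 - x p.1) = x q.1 + t * (x q.2 - x q.1) →
      y p.1 + s * (y p.2 - y p.1) = y q.1 + t * (y q.2 - y q.1) → False

lemma hgt_param {V : Type*} (X Y : V → ℝ) (p : V × V) (z : ℝ) (h : X p.1 < X p.2)
    (h1 : X p.1 ≤ z) (h2 : z ≤ X p.2) : ∃ s : ℝ, 0 ≤ s ∧ s ≤ 1 ∧ X p.1 + s * (X p.2 - X p.1) = z ∧
      Y p.1 + s * (Y p.2 - Y p.1) = hgt X Y p z := by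
  have hd : 0 < X p.2 - X p.1 := by linarith
  refine ⟨(z - X p.1) / (X p.2 - X p.1), by apply div_nonneg <;> linarith,
    by rw [div_le_one hd]; linarith, ?_, ?_⟩
  · field_simp; ring
  · unfold hgt; field_simp

lemma oriented_bound {V : Type*} (W : Finset V) (X Y : V → ℝ) (S : Finset (V × V))
    (hW : ∀ p ∈ S, p.1 ∈ W ∧ p.2 ∈ W) (hN : NoCross X Y S)
    (hdeg : ∀ v ∈ W, ∀ a b : V, ∃ z, z ≠ a ∧ z ≠ b ∧ (v, z) ∈ S) :
    (S.filter fun p => X p.1 < X p.2).card ≤ 3 * W.card := by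
  have h1 : NCa W X Y (S.filter fun p => X p.1 < X p.2) := by
    intro p hp w hw a1 a2 b1 b2 h
    simp only [Finset.mem_filter] at hp
    obtain ⟨z, z1, z2, hz⟩ := hdeg w hw p.1 p.2
    obtain ⟨s, s0, s1, s2, s3⟩ := hgt_param X Y p (X w) hp.2 b1 b2
    refine hN p hp.1 (w, z) hz a1.symm z1.symm a2.symm z2.symm s 0 s0 s1 le_rfl zero_le_one ?_ ?_
    · simpa using s2
    · rw [h] at s3; simpa using s3
  refine planar_core h1 ?_ ?_
  · intro p hp q hq hne x a1 a2 a3 a4 h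
    have hp0 := hp
    have hq0 := hq
    simp only [Finset.mem_filter] at hp hq
    have hdp : X p.2 - X p.1 ≠ 0 := by linarith [hp.2]
    have hdq : X q.2 - X q.1 ≠ 0 := by linarith [hq.2]
    by_cases c1 : p.1 = q.1
    · have hs : slp X Y p = slp X Y q := by
        rw [hgt_slp, hgt_slp, c1] at h
        have : x - X q.1 ≠ 0 := by linarith
        have h' : slp X Y p * (x - X q.1) = slp X Y q * (x - X q.1) := by linarith
        exact mul_right_cancel₀ this h'
      have heq : ∀ z, hgt X Y p z = hgt X Y q z := by
        intro z; rw [hgt_slp, hgt_slp, c1, hs]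
      have c2 : p.2 ≠ q.2 := fun c2 => hne (Prod.ext c1 c2)
      rcases le_total (X p.2) (X q.2) with hl | hl
      · refine h1 q hq0 p.2 (hW p hp.1).2 ?_ c2 (by linarith) hl ?_
        · intro hc; rw [hc] at a2; linarith
        · rw [← heq, hgt_right hp.2]
      · refine h1 p hp0 q.2 (hW q hq.1).2 ?_ c2.symm (by linarith) hl ?_
        · intro hc; rw [hc] at a4; linarith
        · rw [heq, hgt_right hq.2]
    by_cases c2 : p.2 = q.2
    · have hr : hgt X Y p (X p.2) = hgt X Y q (X p.2) := by
        rw [hgt_right hp.2, c2, hgt_right hq.2]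
      have heq : ∀ z, hgt X Y p z = hgt X Y q z := by
        intro z
        rw [hgt_slp, hgt_slp] at *
        have : (slp X Y p - slp X Y q) * (X p.2 - x) = 0 := by linear_combination hr - h
        rcases mul_eq_zero.1 this with h' | h'
        · linear_combination h + (z - x) * h'
        · linarith
      rcases le_total (X p.1) (X q.1) with hl | hl
      · refine h1 p hp0 q.1 (hW q hq.1).1 (Ne.symm c1) ?_ hl (by linarith) ?_
        · intro hc; rw [hc] at a3; linarith
        · rw [heq, hgt_left]
      · refine h1 q hq0 p.1 (hW p hp.1).1 c1 ?_ hl (by linarith) ?_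
        · intro hc; rw [hc] at a1; linarith
        · rw [← heq, hgt_left]
    obtain ⟨s, s0, s1, s2, s3⟩ := hgt_param X Y p x hp.2 a1.le a2.le
    obtain ⟨t, t0, t1, t2, t3⟩ := hgt_param X Y q x hq.2 a3.le a4.le
    refine hN p hp.1 q hq.1 c1 ?_ ?_ c2 s t s0 s1 t0 t1 (by rw [s2, t2]) (by rw [s3, t3, h])
    · intro hc; rw [hc] at a1; linarith
    · intro hc; rw [hc] at a2; linarith
  · intro p hp
    simp only [Finset.mem_filter] at hp
    exact ⟨(hW p hp.1).1, (hW p hp.1).2, hp.2⟩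

lemma exists_shear {V : Type*} (W : Finset V) (x y : V → ℝ)
    (hinj : ∀ a ∈ W, ∀ b ∈ W, x a = x b → y a = y b → a = b) :
    ∃ δ : ℝ, ∀ a ∈ W, ∀ b ∈ W, x a + δ * y a = x b + δ * y b → a = b := by
  obtain ⟨δ, hδ⟩ := Infinite.exists_notMem_finset
    ((W ×ˢ W).image fun p => -(x p.1 - x p.2) / (y p.1 - y p.2))
  refine ⟨δ, fun a ha b hb h => ?_⟩
  by_contra hne
  by_cases hy : y a = y b
  · rw [hy] at h
    exact hne (hinj a ha b hb (by linarith) hy)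
  · apply hδ
    rw [Finset.mem_image]
    refine ⟨(a, b), by simp [ha, hb], ?_⟩
    have : y a - y b ≠ 0 := sub_ne_zero.2 hy
    simp only
    field_simp
    linarith

lemma planar_sym {V : Type*} (x y : V → ℝ) (n : ℕ) : ∀ (W : Finset V) (S : Finset (V × V)),
    W.card = n →
    (∀ p ∈ S, p.1 ∈ W ∧ p.2 ∈ W) → (∀ p ∈ S, p.1 ≠ p.2) → (∀ p ∈ S, p.swap ∈ S) →
    NoCross x y S → S.card ≤ 6 * n := by
  induction n with
  | zero =>
    intro W S hc hW _ _ _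
    rw [Finset.card_eq_zero] at hc
    subst hc
    have : S = ∅ := by
      apply Finset.eq_empty_of_forall_notMem
      intro p hp
      simpa using (hW p hp).1
    simp [this]
  | succ n ih =>
    intro W S hc hW hne hsw hN
    by_cases hd : ∃ v ∈ W, (S.filter fun p => p.1 = v).card ≤ 3
    · obtain ⟨v, hv, hd⟩ := hd
      have h2 : (S.filter fun p => p.2 = v).card ≤ 3 := by
        refine le_trans (Finset.card_le_card_of_injOn Prod.swap ?_ Prod.swap_injective.injOn) hd
        intro p hp
        simp only [Finset.coe_filter, Set.mem_ofPred_eq] at hp ⊢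
        exact ⟨hsw p hp.1, hp.2⟩
      have h3 := ih (W.erase v) (S.filter fun p => p.1 ≠ v ∧ p.2 ≠ v)
        (by rw [Finset.card_erase_of_mem hv, hc]; rfl)
        (by
          intro p hp
          simp only [Finset.mem_filter] at hp
          simp [hp.2.1, hp.2.2, hW p hp.1])
        (fun p hp => hne p (Finset.mem_filter.1 hp).1)
        (by
          intro p hp
          simp only [Finset.mem_filter] at hp ⊢
          exact ⟨hsw p hp.1, hp.2.2, hp.2.1⟩)
        (fun p hp q hq => hN p (Finset.mem_filter.1 hp).1 q (Finset.mem_filter.1 hq).1)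
      have h4 : S ⊆ (S.filter fun p => p.1 ≠ v ∧ p.2 ≠ v) ∪
          ((S.filter fun p => p.1 = v) ∪ (S.filter fun p => p.2 = v)) := by
        intro p hp
        simp only [Finset.mem_union, Finset.mem_filter, hp, true_and]
        tauto
      have h5 := Finset.card_le_card h4
      have h6 := Finset.card_union_le (S.filter fun p => p.1 ≠ v ∧ p.2 ≠ v)
          ((S.filter fun p => p.1 = v) ∪ (S.filter fun p => p.2 = v))
      have h7 := Finset.card_union_le (S.filter fun p => p.1 = v) (S.filter fun p => p.2 = v)
      omega
    push Not at hd
    have hdeg' : ∀ v ∈ W, ∀ a b c : V, ∃ z, z ≠ a ∧ z ≠ b ∧ z ≠ c ∧ (v, z) ∈ S := by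
      intro v hv a b c
      by_contra hcon
      push Not at hcon
      have : (S.filter fun p => p.1 = v).card ≤ ({a, b, c} : Finset V).card := by
        apply Finset.card_le_card_of_injOn Prod.snd
        · intro p hp
          simp only [Finset.coe_filter, Set.mem_ofPred_eq] at hp
          simp only [Finset.coe_insert, Finset.coe_singleton, Set.mem_insert_iff,
            Set.mem_singleton_iff]
          by_contra h
          push Not at h
          apply hcon p.2 h.1 h.2.1 h.2.2
          rw [← hp.2]; exact hp.1
        · intro p hp q hq h
          simp only [Finset.coe_filter, Set.mem_ofPred_eq] at hp hq
          exact Prod.ext (hp.2.trans hq.2.symm) h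
      have h3 : ({a, b, c} : Finset V).card ≤ 3 := Finset.card_le_three
      have := hd v hv
      omega
    have hdeg : ∀ v ∈ W, ∀ a b : V, ∃ z, z ≠ a ∧ z ≠ b ∧ (v, z) ∈ S := by
      intro v hv a b
      obtain ⟨z, h1, h2, _, h3⟩ := hdeg' v hv a b b
      exact ⟨z, h1, h2, h3⟩
    have hinj : ∀ a ∈ W, ∀ b ∈ W, x a = x b → y a = y b → a = b := by
      intro a ha b hb h1 h2
      by_contra hab
      obtain ⟨z, z1, z2, hz⟩ := hdeg a ha b b
      obtain ⟨z', z1', z2', hz'⟩ := hdeg b hb a z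
      refine hN (a, z) hz (b, z') hz' hab z1'.symm z1 z2'.symm 0 0 le_rfl zero_le_one le_rfl
        zero_le_one ?_ ?_
      · simpa using h1
      · simpa using h2
    obtain ⟨δ, hδ⟩ := exists_shear W x y hinj
    have hN1 : NoCross (fun v => x v + δ * y v) y S := by
      intro p hp q hq a1 a2 a3 a4 s t b1 b2 b3 b4 c1 c2
      refine hN p hp q hq a1 a2 a3 a4 s t b1 b2 b3 b4 ?_ c2
      linear_combination c1 - δ * c2
    have hN2 : NoCross (fun v => -(x v + δ * y v)) y S := by
      intro p hp q hq a1 a2 a3 a4 s t b1 b2 b3 b4 c1 c2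
      refine hN p hp q hq a1 a2 a3 a4 s t b1 b2 b3 b4 ?_ c2
      linear_combination - c1 - δ * c2
    have r1 := oriented_bound W _ y S hW hN1 hdeg
    have r2 := oriented_bound W _ y S hW hN2 hdeg
    have hsub : S ⊆ (S.filter fun p => x p.1 + δ * y p.1 < x p.2 + δ * y p.2) ∪
        (S.filter fun p => -(x p.1 + δ * y p.1) < -(x p.2 + δ * y p.2)) := by
      intro p hp
      simp only [Finset.mem_union, Finset.mem_filter, hp, true_and, neg_lt_neg_iff]
      apply lt_or_gt_of_ne
      intro h
      exact hne p hp (hδ _ (hW p hp).1 _ (hW p hp).2 h)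
    have h5 := Finset.card_le_card hsub
    have h6 := Finset.card_union_le (S.filter fun p => x p.1 + δ * y p.1 < x p.2 + δ * y p.2)
        (S.filter fun p => -(x p.1 + δ * y p.1) < -(x p.2 + δ * y p.2))

    omega


def wt {α : Type*} (P : Finset α) (w : α → ℝ) (H : Finset α) : ℝ :=
  (∏ i ∈ H, w i) * ∏ i ∈ P \ H, (1 - w i)

lemma wt_nonneg {α : Type*} (P : Finset α) (w : α → ℝ) (h0 : ∀ i, 0 ≤ w i) (h1 : ∀ i, w i ≤ 1)
    (H : Finset α) : 0 ≤ wt P w H :=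
  mul_nonneg (Finset.prod_nonneg fun i _ => h0 i)
    (Finset.prod_nonneg fun i _ => by linarith [h1 i])

lemma wt_event {α : Type*} (P : Finset α) (w : α → ℝ) (A B : Finset α) (hA : A ⊆ P) (hB : B ⊆ P)
    (hAB : Disjoint A B) :
    ∑ H ∈ P.powerset, wt P w H * (if A ⊆ H ∧ Disjoint H B then 1 else 0) =
      (∏ i ∈ A, w i) * ∏ i ∈ B, (1 - w i) := by
  have key := Finset.prod_add (fun i => if i ∈ B then 0 else w i)
    (fun i => if i ∈ A then 0 else 1 - w i) P
  have e1 : ∏ i ∈ P, ((if i ∈ B then 0 else w i) + (if i ∈ A then 0 else 1 - w i)) =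
      (∏ i ∈ A, w i) * ∏ i ∈ B, (1 - w i) := by
    have : ∀ i ∈ P, ((if i ∈ B then 0 else w i) + (if i ∈ A then 0 else 1 - w i)) =
        (if i ∈ A then w i else 1) * (if i ∈ B then 1 - w i else 1) := by
      intro i _
      by_cases a : i ∈ A
      · have b : i ∉ B := Finset.disjoint_left.1 hAB a
        simp [a, b]
      · by_cases b : i ∈ B <;> simp [a, b]
    rw [Finset.prod_congr rfl this, Finset.prod_mul_distrib, Finset.prod_ite_mem,
      Finset.prod_ite_mem, Finset.inter_eq_right.2 hA, Finset.inter_eq_right.2 hB]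
  rw [← e1, key]
  apply Finset.sum_congr rfl
  intro H hH
  rw [Finset.mem_powerset] at hH
  by_cases h : A ⊆ H ∧ Disjoint H B
  · rw [if_pos h, mul_one, wt]
    congr 1
    · apply Finset.prod_congr rfl
      intro i hi
      rw [if_neg (Finset.disjoint_left.1 h.2 hi)]
    · apply Finset.prod_congr rfl
      intro i hi
      rw [if_neg (fun hA => (Finset.mem_sdiff.1 hi).2 (h.1 hA))]
  · rw [if_neg h, mul_zero]
    symm
    by_cases h1 : A ⊆ H
    · have h2 : ¬ Disjoint H B := fun h2 => h ⟨h1, h2⟩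
      rw [Finset.not_disjoint_iff] at h2
      obtain ⟨i, hi, hiB⟩ := h2
      rw [Finset.prod_eq_zero hi (by simp [hiB]), zero_mul]
    · rw [Finset.not_subset] at h1
      obtain ⟨i, hi, hiH⟩ := h1
      rw [Finset.prod_eq_zero (i := i) (s := P \ H) (by simp [hA hi, hiH]) (by simp [hi]), mul_zero]

lemma wt_sum {α : Type*} (P : Finset α) (w : α → ℝ) : ∑ H ∈ P.powerset, wt P w H = 1 := by
  have := wt_event P w ∅ ∅ (by simp) (by simp) (by simp)
  simpa using this

lemma wt_mem {α : Type*} (P : Finset α) (w : α → ℝ) :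
    ∑ H ∈ P.powerset, wt P w H * (H.card : ℝ) = ∑ i ∈ P, w i := by
  have h : ∀ H ∈ P.powerset, wt P w H * (H.card : ℝ) =
      ∑ i ∈ P, wt P w H * (if {i} ⊆ H ∧ Disjoint H ∅ then 1 else 0) := by
    intro H hH
    rw [Finset.mem_powerset] at hH
    rw [← Finset.mul_sum]
    congr 1
    simp [Finset.inter_eq_right.2 hH]
  rw [Finset.sum_congr rfl h, Finset.sum_comm]
  apply Finset.sum_congr rfl
  intro i hi
  rw [wt_event P w {i} ∅ (by simpa using hi) (by simp) (by simp)]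
  simp

lemma wt_exists {α : Type*} (P : Finset α) (w : α → ℝ) (h0 : ∀ i, 0 ≤ w i) (h1 : ∀ i, w i ≤ 1)
    (F : Finset α → ℝ) : ∃ H ∈ P.powerset, F H ≤ ∑ H ∈ P.powerset, wt P w H * F H := by
  by_contra hcon
  push Not at hcon
  set m := ∑ H ∈ P.powerset, wt P w H * F H with hm
  have : ∑ H ∈ P.powerset, wt P w H * m < ∑ H ∈ P.powerset, wt P w H * F H := by
    apply Finset.sum_lt_sum
    · intro H hH
      exact mul_le_mul_of_nonneg_left (hcon H hH).le (wt_nonneg P w h0 h1 H)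
    · by_contra hc
      push Not at hc
      have hz : ∀ H ∈ P.powerset, wt P w H = 0 := by
        intro H hH
        by_contra hne
        have hp := lt_of_le_of_ne (wt_nonneg P w h0 h1 H) (Ne.symm hne)
        have := hc H hH
        have := mul_lt_mul_of_pos_left (hcon H hH) hp
        linarith
      have := wt_sum P w
      rw [Finset.sum_eq_zero hz] at this
      norm_num at this
  rw [← Finset.sum_mul, wt_sum] at this
  linarith

section disks
variable {V Pt : Type*} [Fintype V] (f : V → Pt → ℝ)

def cov (p : Pt) : Finset V := Finset.univ.filter fun i => f i p ≤ 0

def lowPairs (k : ℕ) : Finset (V × V) := Finset.univ.filter fun e =>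
  e.1 ≠ e.2 ∧ ∃ p, e.1 ∈ cov f p ∧ e.2 ∈ cov f p ∧ (cov f p).card ≤ k

def AffForm : Prop := ∃ (x y g : V → ℝ) (q a b : Pt → ℝ),
  ∀ i p, f i p = q p + x i * a p + y i * b p + g i

variable {f}

lemma sample_bound (hf : AffForm f) (R : Finset V) :
    (Finset.univ.filter fun e : V × V => e.1 ∈ R ∧ e.2 ∈ R ∧ e.1 ≠ e.2 ∧
      ∃ p, e.1 ∈ cov f p ∧ e.2 ∈ cov f p ∧ ∀ k ∈ R, k ∈ cov f p → k = e.1 ∨ k = e.2).card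
      ≤ 6 * R.card := by
  obtain ⟨x, y, g, q, a, b, hf⟩ := hf
  apply planar_sym x y R.card R _ rfl
  · intro p hp
    simp only [Finset.mem_filter] at hp
    exact ⟨hp.2.1, hp.2.2.1⟩
  · intro p hp
    simp only [Finset.mem_filter] at hp
    exact hp.2.2.2.1
  · intro e he
    simp only [Finset.mem_filter, Finset.mem_univ, true_and, Prod.fst_swap, Prod.snd_swap] at he ⊢
    obtain ⟨h1, h2, h3, p, h4, h5, h6⟩ := he
    exact ⟨h2, h1, h3.symm, p, h5, h4, fun k hk hk' => (h6 k hk hk').symm⟩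
  · intro e he e' he' n1 n2 n3 n4 s t s0 s1 t0 t1 c1 c2
    simp only [Finset.mem_filter, Finset.mem_univ, true_and] at he he'
    obtain ⟨h1, h2, h3, p, h4, h5, h6⟩ := he
    obtain ⟨k1, k2, k3, r, k4, k5, k6⟩ := he'
    have a1 : 0 < f e'.1 p := by
      by_contra h
      have := h6 e'.1 k1 (by simpa [cov] using h)
      tauto
    have a2 : 0 < f e'.2 p := by
      by_contra h
      have := h6 e'.2 k2 (by simpa [cov] using h)
      tauto
    have a3 : 0 < f e.1 r := by
      by_contra h
      have := k6 e.1 h1 (by simpa [cov] using h)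
      tauto
    have a4 : 0 < f e.2 r := by
      by_contra h
      have := k6 e.2 h2 (by simpa [cov] using h)
      tauto
    simp only [cov, Finset.mem_filter, Finset.mem_univ, true_and] at h4 h5 k4 k5
    have b1 : (1 - s) * f e.1 p + s * f e.2 p ≤ 0 := by nlinarith
    have b2 : 0 < (1 - t) * f e'.1 p + t * f e'.2 p := by
      rcases eq_or_lt_of_le t0 with h | h
      · rw [← h]; linarith
      · nlinarith [mul_pos h a2, mul_nonneg (sub_nonneg.2 t1) a1.le]
    have b3 : (1 - t) * f e'.1 r + t * f e'.2 r ≤ 0 := by nlinarith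
    have b4 : 0 < (1 - s) * f e.1 r + s * f e.2 r := by
      rcases eq_or_lt_of_le s0 with h | h
      · rw [← h]; linarith
      · nlinarith [mul_pos h a4, mul_nonneg (sub_nonneg.2 s1) a3.le]
    have key : ((1 - s) * f e.1 p + s * f e.2 p) - ((1 - t) * f e'.1 p + t * f e'.2 p) =
        ((1 - s) * f e.1 r + s * f e.2 r) - ((1 - t) * f e'.1 r + t * f e'.2 r) := by
      simp only [hf]
      linear_combination (a p - a r) * c1 + (b p - b r) * c2
    linarith

lemma lowPairs_card (hf : AffForm f) (k : ℕ) (hk : 1 ≤ k) :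
    ((lowPairs f k).card : ℝ) ≤ 24 * Fintype.card V * k := by
  have hk' : (1 : ℝ) ≤ k := by exact_mod_cast hk
  set q : ℝ := 1 / (2 * k) with hq
  have q0 : 0 < q := by positivity
  have qk : q * k = 1 / 2 := by rw [hq]; field_simp
  have q1 : q ≤ 1 / 2 := by nlinarith
  let S : Finset V → Finset (V × V) := fun R => (Finset.univ.filter fun e : V × V =>
    e.1 ∈ R ∧ e.2 ∈ R ∧ e.1 ≠ e.2 ∧
      ∃ p, e.1 ∈ cov f p ∧ e.2 ∈ cov f p ∧ ∀ k ∈ R, k ∈ cov f p → k = e.1 ∨ k = e.2)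
  have up : ∑ R ∈ (Finset.univ : Finset V).powerset, wt Finset.univ (fun _ => q) R * ((S R).card : ℝ)
      ≤ 6 * (Fintype.card V * q) := by
    calc _ ≤ ∑ R ∈ (Finset.univ : Finset V).powerset,
          wt Finset.univ (fun _ => q) R * (6 * (R.card : ℝ)) := by
          apply Finset.sum_le_sum
          intro R _
          apply mul_le_mul_of_nonneg_left _ (wt_nonneg _ _ (fun _ => q0.le) (fun _ => by linarith) _)
          exact_mod_cast sample_bound hf R
      _ = 6 * ∑ R ∈ (Finset.univ : Finset V).powerset,
          wt Finset.univ (fun _ => q) R * (R.card : ℝ) := by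
          rw [Finset.mul_sum]; apply Finset.sum_congr rfl; intros; ring
      _ = _ := by rw [wt_mem]; simp
  have low : ((lowPairs f k).card : ℝ) * (q ^ 2 * (1 / 2)) ≤
      ∑ R ∈ (Finset.univ : Finset V).powerset,
        wt Finset.univ (fun _ => q) R * ((S R).card : ℝ) := by
    calc ((lowPairs f k).card : ℝ) * (q ^ 2 * (1 / 2))
        = ∑ e ∈ lowPairs f k, (q ^ 2 * (1 / 2)) := by simp
      _ ≤ ∑ e ∈ lowPairs f k, ∑ R ∈ (Finset.univ : Finset V).powerset,
          wt Finset.univ (fun _ => q) R * (if e ∈ S R then 1 else 0) := by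
          apply Finset.sum_le_sum
          intro e he
          simp only [lowPairs, Finset.mem_filter, Finset.mem_univ, true_and] at he
          obtain ⟨h1, p, h2, h3, h4⟩ := he
          have ev := wt_event Finset.univ (fun _ : V => q) {e.1, e.2} (cov f p \ {e.1, e.2})
            (by simp) (by simp) Finset.disjoint_sdiff
          simp only [Finset.prod_const] at ev
          rw [Finset.card_pair h1] at ev
          calc q ^ 2 * (1 / 2) ≤ q ^ 2 * (1 - q) ^ (cov f p \ {e.1, e.2}).card := by
                apply mul_le_mul_of_nonneg_left _ (by positivity)
                have hc : (cov f p \ {e.1, e.2}).card ≤ k :=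
                  (Finset.card_le_card Finset.sdiff_subset).trans h4
                calc (1 : ℝ) / 2 = 1 + (k : ℝ) * (-q) := by linarith
                  _ ≤ (1 + (-q)) ^ k := one_add_mul_le_pow (by linarith) k
                  _ = (1 - q) ^ k := by ring
                  _ ≤ _ := pow_le_pow_of_le_one (by linarith) (by linarith) hc
            _ = _ := ev.symm
            _ ≤ _ := by
                apply Finset.sum_le_sum
                intro R _
                apply mul_le_mul_of_nonneg_left _
                  (wt_nonneg _ _ (fun _ => q0.le) (fun _ => by linarith) _)
                by_cases hc : {e.1, e.2} ⊆ R ∧ Disjoint R (cov f p \ {e.1, e.2})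
                · rw [if_pos hc, if_pos]
                  simp only [S, Finset.mem_filter, Finset.mem_univ, true_and]
                  refine ⟨hc.1 (by simp), hc.1 (by simp), h1, p, h2, h3, ?_⟩
                  intro i hi hi'
                  by_contra hcon
                  exact Finset.disjoint_left.1 hc.2 hi (by simp [hi']; tauto)
                · rw [if_neg hc]
                  split_ifs <;> norm_num
      _ = ∑ R ∈ (Finset.univ : Finset V).powerset, ∑ e ∈ lowPairs f k,
          wt Finset.univ (fun _ => q) R * (if e ∈ S R then 1 else 0) := Finset.sum_comm
      _ ≤ _ := by
          apply Finset.sum_le_sum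
          intro R _
          rw [← Finset.mul_sum]
          apply mul_le_mul_of_nonneg_left _
            (wt_nonneg _ _ (fun _ => q0.le) (fun _ => by linarith) _)
          rw [Finset.sum_boole]
          norm_cast
          apply Finset.card_le_card
          intro e he
          exact (Finset.mem_filter.1 he).2
  have h3 : ((lowPairs f k).card : ℝ) * (q ^ 2 * (1 / 2)) ≤ 6 * (Fintype.card V * q) := low.trans up
  have h4 : ((lowPairs f k).card : ℝ) * q ≤ 12 * Fintype.card V := by
    by_contra hc
    push Not at hc
    nlinarith
  have h5 : ((lowPairs f k).card : ℝ) * q * (2 * k) ≤ 12 * Fintype.card V * (2 * k) :=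
    mul_le_mul_of_nonneg_right h4 (by positivity)
  have h6 : ((lowPairs f k).card : ℝ) * q * (2 * k) = (lowPairs f k).card := by
    linear_combination (2 * ((lowPairs f k).card : ℝ)) * qk
  linarith
end disks


section disks2
variable {V Pt : Type*} [Fintype V] {f : V → Pt → ℝ}

variable (f) in
def ranges : Finset (Finset V) := Finset.univ.filter fun Q => ∃ p, cov f p = Q

lemma shatter_le (hf : AffForm f) (s : Finset V) (hs : (ranges f).Shatters s) : s.card ≤ 3 := by
  obtain ⟨x, y, g, q, a, b, hf⟩ := hf
  by_contra hc
  push Not at hc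
  have hnl : ¬ LinearIndependent ℝ (fun i : s => (![1, x i, y i] : Fin 3 → ℝ)) := by
    intro h
    have := h.fintype_card_le_finrank
    simp at this
    omega
  rw [Fintype.not_linearIndependent_iff] at hnl
  obtain ⟨w, hw, i0, hi0⟩ := hnl
  have w0 : ∑ i, w i = 0 := by simpa using congrFun hw 0
  have w1 : ∑ i, w i * x i = 0 := by simpa using congrFun hw 1
  have w2 : ∑ i, w i * y i = 0 := by simpa using congrFun hw 2
  have hconst : ∀ p, ∑ i : s, w i * f i p = ∑ i : s, w i * g i := by
    intro p
    have : ∀ i : s, w i * f i p = w i * q p + (w i * x i) * a p + (w i * y i) * b p + w i * g i := by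
      intro i; rw [hf]; ring
    simp only [this, Finset.sum_add_distrib, ← Finset.sum_mul, w0, w1, w2]
    ring
  have hpos : ∃ i, 0 < w i := by
    by_contra h
    push Not at h
    have := (Finset.sum_eq_zero_iff_of_nonpos (fun i _ => h i)).1 w0 i0 (Finset.mem_univ _)
    exact hi0 this
  have get : ∀ t : Finset s, ∃ p, ∀ i : s, f i p ≤ 0 ↔ i ∈ t := by
    intro t
    obtain ⟨Q, hQ, hQt⟩ := hs (t := t.map (Function.Embedding.subtype _)) (by
      intro i hi
      simp only [Finset.mem_map, Function.Embedding.subtype_apply] at hi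
      obtain ⟨j, _, rfl⟩ := hi
      exact j.2)
    simp only [ranges, Finset.mem_filter, Finset.mem_univ, true_and] at hQ
    obtain ⟨p, rfl⟩ := hQ
    refine ⟨p, fun i => ?_⟩
    have := Finset.ext_iff.1 hQt i
    simpa [cov] using this
  obtain ⟨p, hp⟩ := get (Finset.univ.filter fun i => 0 < w i)
  obtain ⟨r, hr⟩ := get (Finset.univ.filter fun i => w i < 0)
  simp only [Finset.mem_filter, Finset.mem_univ, true_and] at hp hr
  have l1 : ∑ i : s, w i * f i p ≤ 0 := by
    apply Finset.sum_nonpos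
    intro i _
    rcases lt_or_ge 0 (w i) with h | h
    · exact mul_nonpos_of_nonneg_of_nonpos h.le ((hp i).2 h)
    · have : 0 < f i p := by
        by_contra h'
        linarith [(hp i).1 (not_lt.1 h')]
      exact mul_nonpos_of_nonpos_of_nonneg h this.le
  have l2 : 0 < ∑ i : s, w i * f i r := by
    have hneg : ∀ i : s, 0 ≤ w i → 0 < f i r := by
      intro i h
      by_contra h'
      linarith [(hr i).1 (not_lt.1 h')]
    apply Finset.sum_pos'
    · intro i _
      rcases lt_or_ge (w i) 0 with h | h
      · exact mul_nonneg_of_nonpos_of_nonpos h.le ((hr i).2 h)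
      · exact mul_nonneg h (hneg i h).le
    · obtain ⟨i, hi⟩ := hpos
      exact ⟨i, Finset.mem_univ _, mul_pos hi (hneg i hi.le)⟩
  rw [hconst] at l1 l2
  linarith

lemma ranges_card (hf : AffForm f) (hn : 1 ≤ Fintype.card V) :
    (ranges f).card ≤ 4 * Fintype.card V ^ 3 := by
  have hv : (ranges f).vcDim ≤ 3 := by
    apply Finset.sup_le
    intro s hs
    exact shatter_le hf s (Finset.mem_shatterer.1 hs)
  calc (ranges f).card ≤ (ranges f).shatterer.card := Finset.card_le_card_shatterer _
    _ ≤ ∑ k ∈ Finset.Iic (ranges f).vcDim, (Fintype.card V).choose k :=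
        Finset.card_shatterer_le_sum_vcDim
    _ ≤ ∑ k ∈ Finset.Iic 3, (Fintype.card V).choose k := by
        apply Finset.sum_le_sum_of_subset
        exact Finset.Iic_subset_Iic.2 hv
    _ ≤ ∑ k ∈ Finset.Iic 3, Fintype.card V ^ 3 := by
        apply Finset.sum_le_sum
        intro k hk
        exact (Nat.choose_le_pow _ _).trans (Nat.pow_le_pow_right hn (Finset.mem_Iic.1 hk))
    _ = _ := by simp

variable (f) in
def kap (e : V × V) : ℕ := sInf {k | e ∈ lowPairs f k}

lemma lowPairs_mono {k l : ℕ} (h : k ≤ l) : lowPairs f k ⊆ lowPairs f l := by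
  intro e he
  simp only [lowPairs, Finset.mem_filter, Finset.mem_univ, true_and] at he ⊢
  obtain ⟨h1, p, h2, h3, h4⟩ := he
  exact ⟨h1, p, h2, h3, h4.trans h⟩

lemma kap_le {e : V × V} {k : ℕ} (h : e ∈ lowPairs f k) : kap f e ≤ k := Nat.sInf_le h

lemma kap_mem {e : V × V} {k : ℕ} (h : e ∈ lowPairs f k) : e ∈ lowPairs f (kap f e) :=
  Nat.sInf_mem (s := {k | e ∈ lowPairs f k}) ⟨k, h⟩

lemma kap_pos {e : V × V} {k : ℕ} (h : e ∈ lowPairs f k) : 1 ≤ kap f e := by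
  have := kap_mem h
  simp only [lowPairs, Finset.mem_filter, Finset.mem_univ, true_and] at this
  obtain ⟨h1, p, h2, h3, h4⟩ := this
  exact (Finset.card_pos.2 ⟨_, h2⟩).trans_le h4

lemma kap_sum_aux (hf : AffForm f) (m : ℕ) :
    ∑ e ∈ lowPairs f (m + 1), (1 / (kap f e : ℝ) - 1 / ((m + 1 : ℕ) : ℝ)) ≤
      24 * Fintype.card V * ((harmonic (m + 1) : ℝ) - 1) := by
  induction m with
  | zero =>
    have : ∀ e ∈ lowPairs f (0 + 1), (1 / (kap f e : ℝ) - 1 / ((0 + 1 : ℕ) : ℝ)) = 0 := by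
      intro e he
      have h1 := kap_le he
      have h2 := kap_pos he
      have : kap f e = 1 := by omega
      simp [this]
    rw [Finset.sum_eq_zero this]
    simp [harmonic]
  | succ m ih =>
    have e1 : ∑ e ∈ lowPairs f (m + 1), (1 / (kap f e : ℝ) - 1 / ((m + 1 + 1 : ℕ) : ℝ)) =
        ∑ e ∈ lowPairs f (m + 1 + 1), (1 / (kap f e : ℝ) - 1 / ((m + 1 + 1 : ℕ) : ℝ)) := by
      apply Finset.sum_subset (lowPairs_mono (by omega))
      intro e he hne
      have h1 := kap_le he
      have : kap f e = m + 1 + 1 := by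
        by_contra hc
        exact hne (lowPairs_mono (by omega) (kap_mem he))
      rw [this]; simp
    rw [← e1]
    have e2 : ∑ e ∈ lowPairs f (m + 1), (1 / (kap f e : ℝ) - 1 / ((m + 1 + 1 : ℕ) : ℝ)) =
        ∑ e ∈ lowPairs f (m + 1), (1 / (kap f e : ℝ) - 1 / ((m + 1 : ℕ) : ℝ)) +
        (lowPairs f (m + 1)).card * (1 / ((m + 1 : ℕ) : ℝ) - 1 / ((m + 1 + 1 : ℕ) : ℝ)) := by
      rw [← nsmul_eq_mul, ← Finset.sum_const, ← Finset.sum_add_distrib]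
      apply Finset.sum_congr rfl
      intros; ring
    rw [e2, harmonic_succ]
    have hm : (0 : ℝ) < ((m + 1 : ℕ) : ℝ) := by positivity
    have hm2 : (0 : ℝ) < ((m + 1 + 1 : ℕ) : ℝ) := by positivity
    have h3 : (lowPairs f (m + 1)).card * (1 / ((m + 1 : ℕ) : ℝ) - 1 / ((m + 1 + 1 : ℕ) : ℝ)) ≤
        24 * Fintype.card V * (1 / ((m + 1 + 1 : ℕ) : ℝ)) := by
      have hb := lowPairs_card hf (m + 1) (by omega)
      have : (1 / ((m + 1 : ℕ) : ℝ) - 1 / ((m + 1 + 1 : ℕ) : ℝ)) =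
          1 / (((m + 1 : ℕ) : ℝ) * ((m + 1 + 1 : ℕ) : ℝ)) := by
        field_simp
        push_cast; ring
      rw [this]
      calc _ ≤ (24 * Fintype.card V * ((m + 1 : ℕ) : ℝ)) *
            (1 / (((m + 1 : ℕ) : ℝ) * ((m + 1 + 1 : ℕ) : ℝ))) :=
            mul_le_mul_of_nonneg_right hb (by positivity)
        _ = _ := by field_simp
    push_cast at *
    rw [one_div ((m : ℝ) + 1 + 1)] at h3
    rw [one_div ((m : ℝ) + 1 + 1)]
    linarith

lemma kap_sum (hf : AffForm f) (hn : 1 ≤ Fintype.card V) :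
    ∑ e ∈ lowPairs f (Fintype.card V), 1 / (kap f e : ℝ) ≤
      24 * Fintype.card V * (1 + Real.log (Fintype.card V)) := by
  obtain ⟨m, hm⟩ : ∃ m, Fintype.card V = m + 1 := ⟨Fintype.card V - 1, by omega⟩
  have h1 := kap_sum_aux hf m
  have h2 := lowPairs_card hf (m + 1) (by omega)
  have h3 := harmonic_le_one_add_log (m + 1)
  rw [← hm] at h1 h2 h3
  rw [Finset.sum_sub_distrib, Finset.sum_const, nsmul_eq_mul] at h1
  have hn' : (0 : ℝ) < Fintype.card V := by exact_mod_cast hn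
  have h4 : ((lowPairs f (Fintype.card V)).card : ℝ) * (1 / (Fintype.card V : ℝ)) ≤
      24 * Fintype.card V := by
    rw [mul_one_div, div_le_iff₀ hn']; exact h2
  have h5 : 24 * (Fintype.card V : ℝ) * (harmonic (Fintype.card V) : ℝ) ≤
      24 * Fintype.card V * (1 + Real.log (Fintype.card V)) :=
    mul_le_mul_of_nonneg_left h3 (by positivity)
  linarith
end disks2


section disks3
variable {V Pt : Type*} [Fintype V] {f : V → Pt → ℝ}

def cross (S T : Finset V) : Finset (V × V) := (S ×ˢ T).filter fun e => e.1 ≠ e.2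

lemma cross_card (S T : Finset V) (a : ℝ) (ha : 2 ≤ a) (hS : a ≤ S.card) (hT : a ≤ T.card) :
    a ^ 2 / 2 ≤ ((cross S T).card : ℝ) := by
  have h1 := Finset.card_filter_add_card_filter_not (s := S ×ˢ T) (fun e => e.1 ≠ e.2)
  have h2 : ((S ×ˢ T).filter fun e => ¬ e.1 ≠ e.2).card ≤ S.card := by
    apply Finset.card_le_card_of_injOn Prod.fst
    · intro e he
      simp only [Finset.coe_filter, Set.mem_ofPred_eq, Finset.mem_product] at he
      exact he.1.1
    · intro e he e' he' h
      simp only [Finset.coe_filter, Set.mem_ofPred_eq, not_not] at he he'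
      exact Prod.ext h (by rw [← he.2, ← he'.2, h])
  rw [Finset.card_product] at h1
  have h3 : S.card * T.card ≤ (cross S T).card + S.card := by unfold cross; omega
  have h4 : (S.card : ℝ) * T.card ≤ (cross S T).card + S.card := by exact_mod_cast h3
  nlinarith [mul_le_mul hS (sub_le_sub_right hT 1) (by linarith) (by linarith : (0:ℝ) ≤ S.card)]

lemma cov_pair {p : Pt} {e : V × V} (h1 : e.1 ∈ cov f p) (h2 : e.2 ∈ cov f p) (h : e.1 ≠ e.2) :
    e ∈ lowPairs f (cov f p).card := by
  simp only [lowPairs, Finset.mem_filter, Finset.mem_univ, true_and]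
  exact ⟨h, p, h1, h2, le_rfl⟩

variable (f) in
def wgt (X : ℝ) (e : V × V) : ℝ := min 1 (X / kap f e)

lemma bad_prob (X : ℝ) (hX : 0 < X) (p : Pt) (S T : Finset V) (hS : S ⊆ cov f p)
    (hT : T ⊆ cov f p) :
    ∏ e ∈ cross S T, (1 - wgt f X e) ≤ Real.exp (-(X / (cov f p).card * (cross S T).card)) := by
  have h : ∀ e ∈ cross S T, 1 - wgt f X e ≤ Real.exp (-(X / (cov f p).card)) := by
    intro e he
    simp only [cross, Finset.mem_filter, Finset.mem_product] at he
    have hm := cov_pair (hS he.1.1) (hT he.1.2) he.2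
    have h1 : (1 : ℝ) ≤ kap f e := by exact_mod_cast kap_pos hm
    have h2 : (kap f e : ℝ) ≤ (cov f p).card := by exact_mod_cast kap_le hm
    unfold wgt
    rcases le_total 1 (X / (kap f e : ℝ)) with h | h
    · rw [min_eq_left h, sub_self]; positivity
    · rw [min_eq_right h]
      have h3 : X / (cov f p).card ≤ X / kap f e :=
        div_le_div_of_nonneg_left hX.le (by linarith) h2
      have := Real.add_one_le_exp (-(X / (cov f p).card))
      linarith
  calc _ ≤ ∏ e ∈ cross S T, Real.exp (-(X / (cov f p).card)) :=
        Finset.prod_le_prod (fun e _ => by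
          have : wgt f X e ≤ 1 := min_le_left _ _
          linarith) h
    _ = _ := by
        rw [Finset.prod_const, ← Real.exp_nat_mul]
        congr 1; ring

variable (f) in
def badSet (ε : ℝ) (α : ℕ) : Finset (Finset V × (Finset V × Finset V)) :=
  (ranges f).biUnion fun Q => if α < Q.card then
    ((Q.powerset ×ˢ Q.powerset).filter fun st => ε / 4 * Q.card ≤ st.1.card ∧
      ε / 4 * Q.card ≤ st.2.card).image fun st => (Q, st) else ∅

lemma bad_sum (hf : AffForm f) (hn : 1 ≤ Fintype.card V) (ε : ℝ) (h0 : 0 < ε) (h1 : ε < 1) (α : ℕ)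
    (hα : 8 * (ε⁻¹ ^ 2 + 4 * Real.log (Fintype.card V)) ≤ α) :
    ∑ b ∈ badSet f ε α, ∏ e ∈ cross b.2.1 b.2.2, (1 - wgt f (96 * ε⁻¹ ^ 2) e) ≤ 4 / 9 := by
  have hinv : 1 ≤ ε⁻¹ := (one_le_inv₀ h0).2 h1.le
  have hlog : 0 ≤ Real.log (Fintype.card V) := Real.log_natCast_nonneg _
  have hn' : (0 : ℝ) < Fintype.card V := by exact_mod_cast hn
  have hε : ε * ε⁻¹ = 1 := mul_inv_cancel₀ h0.ne'
  have hnn : ∀ b : Finset V × (Finset V × Finset V),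
      0 ≤ ∏ e ∈ cross b.2.1 b.2.2, (1 - wgt f (96 * ε⁻¹ ^ 2) e) := by
    intro b
    apply Finset.prod_nonneg
    intro e _
    have : wgt f (96 * ε⁻¹ ^ 2) e ≤ 1 := min_le_left _ _
    linarith
  have hinner : ∀ Q ∈ ranges f, ∑ b ∈ (if α < Q.card then
    ((Q.powerset ×ˢ Q.powerset).filter fun st => ε / 4 * Q.card ≤ st.1.card ∧
      ε / 4 * Q.card ≤ st.2.card).image fun st => (Q, st) else ∅),
      ∏ e ∈ cross b.2.1 b.2.2, (1 - wgt f (96 * ε⁻¹ ^ 2) e) ≤ Real.exp (-α) := by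
    intro Q hQ
    simp only [ranges, Finset.mem_filter, Finset.mem_univ, true_and] at hQ
    obtain ⟨p, rfl⟩ := hQ
    split_ifs with hc
    · set ν : ℝ := ((cov f p).card : ℝ) with hν
      have hαν : (α : ℝ) ≤ ν := by rw [hν]; exact_mod_cast hc.le
      have hν8 : 8 * ε⁻¹ ^ 2 ≤ ν := by nlinarith
      have hνpos : 0 < ν := by nlinarith
      have ha : 2 ≤ ε / 4 * ν := by
        have : ε * (8 * ε⁻¹ ^ 2) ≤ ε * ν := mul_le_mul_of_nonneg_left hν8 h0.le
        have h2 : ε * (8 * ε⁻¹ ^ 2) = 8 * ε⁻¹ := by linear_combination 8 * ε⁻¹ * hε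
        linarith
      rw [Finset.sum_image (by intro a _ b _ h; exact (Prod.ext_iff.1 h).2)]
      calc _ ≤ ∑ st ∈ ((cov f p).powerset ×ˢ (cov f p).powerset).filter fun st =>
              ε / 4 * ν ≤ st.1.card ∧ ε / 4 * ν ≤ st.2.card, Real.exp (-3 * ν) := by
            apply Finset.sum_le_sum
            intro st hst
            simp only [Finset.mem_filter, Finset.mem_product, Finset.mem_powerset] at hst
            obtain ⟨⟨a1, a2⟩, a3, a4⟩ := hst
            refine (bad_prob (96 * ε⁻¹ ^ 2) (by positivity) p st.1 st.2 a1 a2).trans ?_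
            rw [Real.exp_le_exp]
            have hcr := cross_card st.1 st.2 _ ha a3 a4
            have : 96 * ε⁻¹ ^ 2 / ν * ((ε / 4 * ν) ^ 2 / 2) ≤
                96 * ε⁻¹ ^ 2 / ν * ((cross st.1 st.2).card : ℝ) :=
              mul_le_mul_of_nonneg_left hcr (by positivity)
            have h2 : 96 * ε⁻¹ ^ 2 / ν * ((ε / 4 * ν) ^ 2 / 2) = 3 * ν := by
              field_simp; norm_num
            rw [← hν]
            linarith
        _ ≤ ∑ st ∈ ((cov f p).powerset ×ˢ (cov f p).powerset), Real.exp (-3 * ν) := by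
            apply Finset.sum_le_sum_of_subset_of_nonneg (Finset.filter_subset _ _)
            intros; positivity
        _ = (4 : ℝ) ^ (cov f p).card * Real.exp (-3 * ν) := by
            rw [Finset.sum_const, Finset.card_product, Finset.card_powerset, nsmul_eq_mul]
            push_cast
            rw [← mul_pow]; norm_num
        _ ≤ Real.exp (2 * ν) * Real.exp (-3 * ν) := by
            apply mul_le_mul_of_nonneg_right _ (by positivity)
            rw [mul_comm, hν, Real.exp_nat_mul]
            apply pow_le_pow_left₀ (by norm_num)
            have h1 : (2 : ℝ) ≤ Real.exp 1 := by linarith [Real.add_one_le_exp 1]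
            have h2 : Real.exp 2 = Real.exp 1 * Real.exp 1 := by rw [← Real.exp_add]; norm_num
            nlinarith
        _ ≤ Real.exp (-α) := by
            rw [← Real.exp_add, Real.exp_le_exp]; linarith
    · rw [Finset.sum_empty]; positivity
  calc _ ≤ ∑ Q ∈ ranges f, ∑ b ∈ (if α < Q.card then
    ((Q.powerset ×ˢ Q.powerset).filter fun st => ε / 4 * Q.card ≤ st.1.card ∧
      ε / 4 * Q.card ≤ st.2.card).image fun st => (Q, st) else ∅),
      ∏ e ∈ cross b.2.1 b.2.2, (1 - wgt f (96 * ε⁻¹ ^ 2) e) := by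
        apply le_of_eq
        unfold badSet
        apply Finset.sum_biUnion
        intro Q _ Q' _ hne
        rw [Function.onFun, Finset.disjoint_left]
        intro b hb hb'
        split_ifs at hb hb' <;> simp at hb hb'
        obtain ⟨_, _, _, h⟩ := hb
        obtain ⟨_, _, _, h'⟩ := hb'
        apply hne
        rw [← h] at h'
        exact (Prod.ext_iff.1 h').1.symm
    _ ≤ ∑ Q ∈ ranges f, Real.exp (-α) := Finset.sum_le_sum hinner
    _ = (ranges f).card * Real.exp (-α) := by rw [Finset.sum_const, nsmul_eq_mul]
    _ ≤ (4 * Fintype.card V ^ 3) * (1 / 9 * (1 / (Fintype.card V : ℝ) ^ 3)) := by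
        apply mul_le_mul _ _ (by positivity) (by positivity)
        · exact_mod_cast ranges_card hf hn
        · have h2 : Real.exp (-α) ≤ Real.exp (-8 + -(3 * Real.log (Fintype.card V))) := by
            rw [Real.exp_le_exp]
            nlinarith
          refine h2.trans ?_
          rw [Real.exp_add, Real.exp_neg, Real.exp_neg]
          have h3 : Real.exp (3 * Real.log (Fintype.card V)) = (Fintype.card V : ℝ) ^ 3 := by
            have := Real.exp_nat_mul (Real.log (Fintype.card V)) 3
            rw [Real.exp_log hn'] at this
            exact_mod_cast this
          rw [h3, one_div, one_div]
          apply mul_le_mul_of_nonneg_right _ (by positivity)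
          apply inv_anti₀ (by norm_num)
          linarith [Real.add_one_le_exp 8]
    _ = 4 / 9 := by field_simp

lemma abstract_main (hf : AffForm f) (ε : ℝ) (h0 : 0 < ε) (h1 : ε < 1) (α : ℕ)
    (hα : α = ⌈8 * (ε⁻¹ ^ 2 + 4 * Real.log (Fintype.card V))⌉₊) :
    ∃ H : Finset (V × V), H ⊆ lowPairs f (Fintype.card V) ∧
      (H.card : ℝ) ≤ 6000 * ε⁻¹ ^ 4 * Fintype.card V * (1 + Real.log (Fintype.card V)) ^ 2 ∧
      (∀ p, (cov f p).card ≤ α → ∀ i ∈ cov f p, ∀ j ∈ cov f p, i ≠ j → (i, j) ∈ H) ∧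
      (∀ p, α < (cov f p).card → ∀ S ⊆ cov f p, ∀ T ⊆ cov f p,
        ε / 4 * (cov f p).card ≤ S.card → ε / 4 * (cov f p).card ≤ T.card →
        ∃ s ∈ S, ∃ t ∈ T, s ≠ t ∧ (s, t) ∈ H) := by
  rcases Nat.eq_zero_or_pos (Fintype.card V) with hn | hn
  · have : IsEmpty V := Fintype.card_eq_zero_iff.1 hn
    refine ⟨∅, by simp, by simp [hn], fun p _ i => isEmptyElim i, fun p hp => ?_⟩
    simp [Finset.eq_empty_of_isEmpty] at hp
  have hinv : 1 ≤ ε⁻¹ := (one_le_inv₀ h0).2 h1.le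
  have hlog : 0 ≤ Real.log (Fintype.card V) := Real.log_natCast_nonneg _
  have hn' : (0 : ℝ) < Fintype.card V := by exact_mod_cast hn
  have hα1 : 8 * (ε⁻¹ ^ 2 + 4 * Real.log (Fintype.card V)) ≤ α := by rw [hα]; exact Nat.le_ceil _
  have hα2 : (α : ℝ) < 8 * (ε⁻¹ ^ 2 + 4 * Real.log (Fintype.card V)) + 1 := by
    rw [hα]; exact Nat.ceil_lt_add_one (by positivity)
  have hαpos : 1 ≤ α := by
    have : (1 : ℝ) ≤ α := by nlinarith
    exact_mod_cast this
  set P := lowPairs f (Fintype.card V) with hP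
  set X : ℝ := 96 * ε⁻¹ ^ 2 with hX
  have hXp : 0 < X := by positivity
  set L : ℝ := 1 + Real.log (Fintype.card V) with hL
  have hL1 : 1 ≤ L := by linarith
  set μ : ℝ := X * (24 * Fintype.card V * L) with hμ
  have hμp : 0 < μ := by positivity
  have w0 : ∀ e, 0 ≤ wgt f X e := fun e => le_min zero_le_one (by positivity)
  have w1 : ∀ e, wgt f X e ≤ 1 := fun e => min_le_left _ _
  have hcardle : ∀ p, (cov f p).card ≤ Fintype.card V := fun p => Finset.card_le_univ _
  have hbP : ∀ b ∈ badSet f ε α, cross b.2.1 b.2.2 ⊆ P := by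
    intro b hb e he
    simp only [badSet, Finset.mem_biUnion] at hb
    obtain ⟨Q, hQ, hb⟩ := hb
    simp only [ranges, Finset.mem_filter, Finset.mem_univ, true_and] at hQ
    obtain ⟨p, rfl⟩ := hQ
    split_ifs at hb
    · simp only [Finset.mem_image, Finset.mem_filter, Finset.mem_product,
        Finset.mem_powerset] at hb
      obtain ⟨st, ⟨⟨a1, a2⟩, _⟩, rfl⟩ := hb
      simp only [cross, Finset.mem_filter, Finset.mem_product] at he
      exact lowPairs_mono (hcardle p) (cov_pair (a1 he.1.1) (a2 he.1.2) he.2)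
    · simp at hb
  obtain ⟨H, hHP, hH⟩ := wt_exists P (wgt f X) w0 w1 (fun H => (H.card : ℝ) * (1 / (2 * μ)) +
    ∑ b ∈ badSet f ε α, (if ∅ ⊆ H ∧ Disjoint H (cross b.2.1 b.2.2) then (1 : ℝ) else 0))
  have hE : ∑ H ∈ P.powerset, wt P (wgt f X) H * ((H.card : ℝ) * (1 / (2 * μ)) +
    ∑ b ∈ badSet f ε α, (if ∅ ⊆ H ∧ Disjoint H (cross b.2.1 b.2.2) then (1 : ℝ) else 0)) < 1 := by
    simp only [mul_add, Finset.sum_add_distrib, ← mul_assoc]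
    rw [← Finset.sum_mul, wt_mem]
    simp only [Finset.mul_sum]
    rw [Finset.sum_comm]
    have hb : ∑ b ∈ badSet f ε α, ∑ H ∈ P.powerset, wt P (wgt f X) H *
        (if ∅ ⊆ H ∧ Disjoint H (cross b.2.1 b.2.2) then (1 : ℝ) else 0) ≤ 4 / 9 := by
      refine le_trans (le_of_eq ?_) (bad_sum hf hn ε h0 h1 α hα1)
      apply Finset.sum_congr rfl
      intro b hb
      have ev := wt_event P (wgt f X) ∅ (cross b.2.1 b.2.2) (by simp) (hbP b hb) (by simp)
      rw [Finset.prod_empty, one_mul] at ev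
      refine Eq.trans ?_ ev
      apply Finset.sum_congr rfl
      intro H _
      congr
    have hs : ∑ e ∈ P, wgt f X e ≤ μ := by
      calc _ ≤ ∑ e ∈ P, X * (1 / (kap f e : ℝ)) := by
            apply Finset.sum_le_sum
            intro e _
            rw [mul_one_div]; exact min_le_right _ _
        _ = X * ∑ e ∈ P, 1 / (kap f e : ℝ) := by rw [Finset.mul_sum]
        _ ≤ μ := mul_le_mul_of_nonneg_left (kap_sum hf hn) hXp.le
    have hs2 : (∑ e ∈ P, wgt f X e) * (1 / (2 * μ)) ≤ 1 / 2 := by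
      calc _ ≤ μ * (1 / (2 * μ)) := mul_le_mul_of_nonneg_right hs (by positivity)
        _ = 1 / 2 := by field_simp
    linarith
  have hF := lt_of_le_of_lt hH hE
  have hsum0 : 0 ≤ ∑ b ∈ badSet f ε α,
      (if ∅ ⊆ H ∧ Disjoint H (cross b.2.1 b.2.2) then (1 : ℝ) else 0) :=
    Finset.sum_nonneg fun b _ => by split_ifs <;> norm_num
  have hHc : (H.card : ℝ) ≤ 2 * μ := by
    have : (H.card : ℝ) * (1 / (2 * μ)) < 1 := by linarith
    rw [mul_one_div, div_lt_one (by positivity)] at this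
    exact this.le
  have hgood : ∀ b ∈ badSet f ε α, ¬ Disjoint H (cross b.2.1 b.2.2) := by
    intro b hb hd
    have h2 := Finset.single_le_sum (f := fun b : Finset V × (Finset V × Finset V) =>
      (if ∅ ⊆ H ∧ Disjoint H (cross b.2.1 b.2.2) then (1 : ℝ) else 0))
      (fun b _ => by split_ifs <;> norm_num) hb
    simp only [Finset.empty_subset, true_and, hd, if_true] at h2
    have h3 : 0 ≤ (H.card : ℝ) * (1 / (2 * μ)) := by positivity
    simp only [Finset.empty_subset, true_and] at hF
    linarith
  refine ⟨H ∪ (lowPairs f α ∩ P), ?_, ?_, ?_, ?_⟩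
  · exact Finset.union_subset (Finset.mem_powerset.1 hHP) Finset.inter_subset_right
  · have c1 : ((H ∪ (lowPairs f α ∩ P)).card : ℝ) ≤ H.card + (lowPairs f α).card := by
      have := Finset.card_union_le H (lowPairs f α ∩ P)
      have h2 := Finset.card_le_card (Finset.inter_subset_left (s₁ := lowPairs f α) (s₂ := P))
      exact_mod_cast this.trans (by omega)
    have c2 := lowPairs_card hf α hαpos
    set I : ℝ := ε⁻¹ ^ 2 with hI
    have hI1 : 1 ≤ I := one_le_pow₀ hinv
    have c3 : (α : ℝ) ≤ 41 * (I * L) := by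
      have : I * L = I + I * Real.log (Fintype.card V) := by rw [hL]; ring
      nlinarith
    have c4 : 24 * (Fintype.card V : ℝ) * α ≤ 24 * Fintype.card V * (41 * (I * L)) :=
      mul_le_mul_of_nonneg_left c3 (by positivity)
    have c5 : I * L ≤ (I * L) ^ 2 := by
      have : 1 ≤ I * L := one_le_mul_of_one_le_of_one_le hI1 hL1
      nlinarith
    have c6 : (Fintype.card V : ℝ) * (I * L) ≤ Fintype.card V * (I * L) ^ 2 :=
      mul_le_mul_of_nonneg_left c5 hn'.le
    have c7 : 6000 * ε⁻¹ ^ 4 * Fintype.card V * L ^ 2 = 6000 * (Fintype.card V * (I * L) ^ 2) := by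
      rw [hI]; ring
    have c8 : 2 * μ = 4608 * (Fintype.card V * (I * L)) := by rw [hμ, hX]; ring
    have c9 : 0 ≤ (Fintype.card V : ℝ) * (I * L) := by positivity
    rw [c7]
    nlinarith
  · intro p hp i hi j hj hij
    have := cov_pair (e := (i, j)) hi hj hij
    exact Finset.mem_union_right _ (Finset.mem_inter.2
      ⟨lowPairs_mono hp this, lowPairs_mono (hcardle p) this⟩)
  · intro p hp S hS T hT a1 a2
    have := hgood (cov f p, (S, T)) (by
      simp only [badSet, Finset.mem_biUnion]
      refine ⟨cov f p, by simp [ranges], ?_⟩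
      rw [if_pos hp]
      simp only [Finset.mem_image, Finset.mem_filter, Finset.mem_product, Finset.mem_powerset]
      exact ⟨(S, T), ⟨⟨hS, hT⟩, a1, a2⟩, rfl⟩)
    rw [Finset.not_disjoint_iff] at this
    obtain ⟨e, he, hec⟩ := this
    simp only [cross, Finset.mem_filter, Finset.mem_product] at hec
    exact ⟨e.1, hec.1.1, e.2, hec.1.2, hec.2, Finset.mem_union_left _ he⟩
end disks3


/-- There are universal constants `C, c > 0` so that for every
`ε ∈ (0,1)` and finite set `D` of `n` disks in general position, setting
`α = ⌈c·(ε⁻² + 4·ln n)⌉`, there is a subgraph `H` of the intersection graph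
with at most `C·ε⁻⁴·n·(1 + log n)²` edges such that (i) for every point of
depth at most `α` the subgraph of `H` induced on the disks covering it is
complete, and (ii) for every point of depth larger than `α` that induced
subgraph is an `(ε/4)`-connector. -/
theorem depth_expander_construction :
    ∃ C c : ℝ, 0 < C ∧ 0 < c ∧
      ∀ (ε : ℝ), 0 < ε → ε < 1 →
      ∀ (D : Finset (Set Plane)), (∀ d ∈ D, IsDisk d) → GeneralPosition D →
      ∃ H : SimpleGraph {d // d ∈ D}, H ≤ IG D ∧
        (H.edgeSet.ncard : ℝ) ≤ C * ε⁻¹ ^ 4 * D.card * (1 + Real.log D.card) ^ 2 ∧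
        (∀ p : Plane, diskDepth D p ≤ ⌈c * (ε⁻¹ ^ 2 + 4 * Real.log D.card)⌉₊ →
          ∀ d₁ d₂ : {d // d ∈ D}, p ∈ d₁.1 → p ∈ d₂.1 → d₁ ≠ d₂ → H.Adj d₁ d₂) ∧
        (∀ p : Plane, ⌈c * (ε⁻¹ ^ 2 + 4 * Real.log D.card)⌉₊ < diskDepth D p →
          IsConnector (ε / 4) (H.induce {d : {d // d ∈ D} | p ∈ d.1})) := by
  refine ⟨6000, 8, by norm_num, by norm_num, ?_⟩
  intro ε h0 h1 D hD _
  have hch : ∀ d : {d // d ∈ D}, ∃ cr : Plane × ℝ, 0 < cr.2 ∧ d.1 = Metric.closedBall cr.1 cr.2 := by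
    intro d
    obtain ⟨c, r, hr, h⟩ := hD d.1 d.2
    exact ⟨(c, r), hr, h⟩
  choose cr hcr hball using hch
  set f : {d // d ∈ D} → Plane → ℝ := fun i p =>
    (p 0 ^ 2 + p 1 ^ 2) + ((cr i).1 0) * (-2 * p 0) + ((cr i).1 1) * (-2 * p 1) +
      ((cr i).1 0 ^ 2 + (cr i).1 1 ^ 2 - (cr i).2 ^ 2) with hfdef
  have hmem : ∀ (i : {d // d ∈ D}) (p : Plane), p ∈ i.1 ↔ f i p ≤ 0 := by
    intro i p
    rw [hball i, Metric.mem_closedBall, EuclideanSpace.dist_eq, Real.sqrt_le_left (hcr i).le,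
      Fin.sum_univ_two, Real.dist_eq, Real.dist_eq, sq_abs, sq_abs]
    simp only [hfdef]
    constructor <;> intro h <;> nlinarith
  have hmc : ∀ (i : {d // d ∈ D}) (p : Plane), p ∈ i.1 ↔ i ∈ cov f p := by
    intro i p
    rw [hmem]; simp [cov]
  have hf : AffForm f := ⟨fun i => (cr i).1 0, fun i => (cr i).1 1,
    fun i => (cr i).1 0 ^ 2 + (cr i).1 1 ^ 2 - (cr i).2 ^ 2, fun p => p 0 ^ 2 + p 1 ^ 2,
    fun p => -2 * p 0, fun p => -2 * p 1, fun i p => rfl⟩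
  have hcard : Fintype.card {d // d ∈ D} = D.card := Fintype.card_coe D
  have hdepth : ∀ p, diskDepth D p = (cov f p).card := by
    intro p
    have : {d : Set Plane | d ∈ D ∧ p ∈ d} = ((cov f p).image Subtype.val : Finset (Set Plane)) := by
      ext d
      simp only [Set.mem_setOf_eq, Finset.coe_image, Set.mem_image, Finset.mem_coe]
      constructor
      · rintro ⟨a, b⟩
        exact ⟨⟨d, a⟩, (hmc ⟨d, a⟩ p).1 b, rfl⟩
      · rintro ⟨i, a, rfl⟩
        exact ⟨i.2, (hmc i p).2 a⟩
    rw [diskDepth, this, Set.ncard_coe_finset, Finset.card_image_of_injective _ Subtype.val_injective]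
  obtain ⟨Hs, H1, H2, H3, H4⟩ := abstract_main hf ε h0 h1 _ rfl
  rw [hcard] at H2 H3 H4
  refine ⟨SimpleGraph.fromRel (fun i j => (i, j) ∈ Hs), ?_, ?_, ?_, ?_⟩
  · intro i j hij
    rw [SimpleGraph.fromRel_adj] at hij
    rw [IG, SimpleGraph.fromRel_adj]
    refine ⟨hij.1, ?_⟩
    have key : ∀ i j, (i, j) ∈ Hs → (i.1 ∩ j.1).Nonempty := by
      intro i j h
      have := H1 h
      simp only [lowPairs, Finset.mem_filter] at this
      obtain ⟨_, _, p, a, b, _⟩ := this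
      exact ⟨p, (hmc i p).2 a, (hmc j p).2 b⟩
    exact hij.2.imp (key _ _) (key _ _)
  · refine le_trans ?_ H2
    have hsub : (SimpleGraph.fromRel (fun i j => (i, j) ∈ Hs)).edgeSet ⊆
        ((Hs.image (fun e => s(e.1, e.2)) : Finset (Sym2 {d // d ∈ D})) : Set _) := by
      intro e
      induction e using Sym2.ind with
      | _ i j =>
        intro h
        rw [SimpleGraph.mem_edgeSet, SimpleGraph.fromRel_adj] at h
        rw [Finset.coe_image]
        rcases h.2 with h | h
        · exact ⟨(i, j), h, rfl⟩
        · exact ⟨(j, i), h, Sym2.eq_swap⟩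
    have a1 := Set.ncard_le_ncard hsub (Finset.finite_toSet _)
    rw [Set.ncard_coe_finset] at a1
    exact_mod_cast a1.trans Finset.card_image_le
  · intro p hp i j hi hj hij
    rw [hdepth] at hp
    rw [SimpleGraph.fromRel_adj]
    exact ⟨hij, Or.inl (H3 p hp i ((hmc i p).1 hi) j ((hmc j p).1 hj) hij)⟩
  · intro p hp
    rw [hdepth] at hp
    set U : Set {d // d ∈ D} := {d | p ∈ d.1} with hU
    intro S hS
    have hUc : U = (cov f p : Set _) := by
      ext i; exact hmc i p
    have hν : Nat.card U = (cov f p).card := by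
      rw [Nat.card_coe_set_eq, hUc, Set.ncard_coe_finset]
    rw [hν] at hS ⊢
    by_contra hcon
    push Not at hcon
    set N := Nbhd (SimpleGraph.induce U (SimpleGraph.fromRel (fun i j => (i, j) ∈ Hs))) S with hN
    have hT : N.ncard + Nᶜ.ncard = (cov f p).card := by
      rw [← hν]; exact Set.ncard_add_ncard_compl N
    have hT2 : (N.ncard : ℝ) + Nᶜ.ncard = (cov f p).card := by exact_mod_cast hT
    have himg : ∀ A : Set U, ∃ B : Finset {d // d ∈ D}, B ⊆ cov f p ∧ B.card = A.ncard ∧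
        ∀ i ∈ B, ∃ h : i ∈ U, (⟨i, h⟩ : U) ∈ A := by
      intro A
      refine ⟨A.toFinset.image Subtype.val, ?_, ?_, ?_⟩
      · intro i hi
        simp only [Finset.mem_image] at hi
        obtain ⟨u, _, rfl⟩ := hi
        exact (hmc _ p).1 u.2
      · rw [Finset.card_image_of_injective _ Subtype.val_injective, Set.ncard_eq_toFinset_card']
      · intro i hi
        simp only [Finset.mem_image, Set.mem_toFinset] at hi
        obtain ⟨u, h, rfl⟩ := hi
        exact ⟨u.2, h⟩
    obtain ⟨S', s1, s2, s3⟩ := himg S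
    obtain ⟨T', t1, t2, t3⟩ := himg Nᶜ
    obtain ⟨s, hs, t, ht, hst, hmemH⟩ := H4 p hp S' s1 T' t1 (by rw [s2]; exact hS)
      (by rw [t2]; linarith)
    obtain ⟨su, sS⟩ := s3 s hs
    obtain ⟨tu, tN⟩ := t3 t ht
    apply tN
    refine ⟨⟨s, su⟩, sS, ?_⟩
    rw [SimpleGraph.comap_adj, SimpleGraph.fromRel_adj]
    exact ⟨fun h => hst h.symm, Or.inr hmemH⟩
end
end

section
/- Let ε ∈ (0,1), let V be a finite set of ν objects, and let ξ be an integer with ν ≤ ξ ≤ 2ν. Let χ_1, …, χ_M : V → ℤ/ξℤ be independent uniformly random colorings, and let G be the graph on V in which distinct u, v are adjacent iff for some i ∈ {1,…,M}, χ_i(u) − χ_i(v) ≡ ±1 (mod ξ). If ν ≥ 640/ε² and M ≥ 2600/ε², then with probability at least 1 − exp(−4ν), the graph G is an (ε/4)-connector. -/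
open scoped Classical

noncomputable section

lemma aux_resample {V C : Type*} [Fintype V] [Fintype C] (v : V) (F : (V → C) → ℝ) :
    ∑ f : V → C, ∑ c : C, F (Function.update f v c) = (Fintype.card C : ℝ) * ∑ f, F f := by
  have hinv : Function.Involutive
      (fun p : (V → C) × C => (Function.update p.1 v p.2, p.1 v)) := by
    rintro ⟨f, c⟩
    simp
  have h := Equiv.sum_comp hinv.toPerm (fun p : (V → C) × C => F p.1)
  rw [Fintype.sum_prod_type, Fintype.sum_prod_type] at h
  simp only [Function.Involutive.coe_toPerm, Finset.sum_const, Finset.card_univ, nsmul_eq_mul] at h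
  rw [h, Finset.mul_sum]

lemma aux_B {V C : Type*} [Fintype V] [Fintype C] [Nonempty C] [AddGroup C] [One C] (A B : Finset V) 
    (hAB : Disjoint A B) : ∀ k : ℕ,
    ∑ f : V → C, (if ∀ u ∈ A, ∀ v ∈ B, f v - f u ≠ 1 then (1:ℝ) else 0) *
        (1 - ((A.image f).card : ℝ) / Fintype.card C) ^ k
      = ∑ f : V → C, (1 - ((A.image f).card : ℝ) / Fintype.card C) ^ (k + B.card) := by
  have hn : (0:ℝ) < Fintype.card C := by exact_mod_cast Fintype.card_pos
  induction B using Finset.induction_on with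
  | empty => intro k; simp
  | insert v B hv ih =>
    intro k
    rw [Finset.disjoint_insert_right] at hAB
    rw [Finset.card_insert_of_notMem hv, show k + (B.card + 1) = (k + 1) + B.card by ring,
      ← ih hAB.2 (k+1)]
    apply mul_left_cancel₀ hn.ne'
    rw [← aux_resample v, Finset.mul_sum]
    refine Finset.sum_congr rfl fun f _ => ?_
    have himg : ∀ c, A.image (Function.update f v c) = A.image f := fun c =>
      Finset.image_congr fun u hu => Function.update_of_ne (by rintro rfl; exact hAB.1 hu) _ _
    have hcond : ∀ c, (∀ u ∈ A, ∀ w ∈ insert v B,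
        Function.update f v c w - Function.update f v c u ≠ 1) ↔
        (∀ u ∈ A, ∀ w ∈ B, f w - f u ≠ 1) ∧ c ∉ (A.image f).image (fun x => 1 + x) := by
      intro c
      have h1 : ∀ u ∈ A, Function.update f v c u = f u := fun u hu =>
        Function.update_of_ne (by rintro rfl; exact hAB.1 hu) _ _
      have h2 : ∀ u ∈ B, Function.update f v c u = f u := fun u hu =>
        Function.update_of_ne (by rintro rfl; exact hv hu) _ _
      constructor
      · intro h
        refine ⟨fun u hu w hw => ?_, ?_⟩
        · have := h u hu w (Finset.mem_insert_of_mem hw)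
          rwa [h1 u hu, h2 w hw] at this
        · simp only [Finset.mem_image, not_exists, not_and, forall_exists_index, and_imp,
            forall_apply_eq_imp_iff₂]
          intro u hu he
          have := h u hu v (Finset.mem_insert_self _ _)
          rw [h1 u hu, Function.update_self, ← he] at this
          simp at this
      · rintro ⟨h, h'⟩ u hu w hw
        rw [h1 u hu]
        rcases Finset.mem_insert.1 hw with rfl | hw
        · rw [Function.update_self]
          intro he
          apply h'
          rw [← he]
          simp only [Finset.mem_image]
          exact ⟨f u, ⟨u, hu, rfl⟩, by simp⟩
        · rw [h2 w hw]; exact h u hu w hw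
    simp only [hcond, himg]
    have hcount : ∑ c : C, (if c ∉ (A.image f).image (fun x => 1 + x) then (1:ℝ) else 0)
        = Fintype.card C - ((A.image f).card : ℝ) := by
      rw [Finset.sum_boole, Finset.filter_notMem_eq_sdiff, ← Finset.compl_eq_univ_sdiff,
        Finset.card_compl, Finset.card_image_of_injective _ (add_right_injective 1),
        Nat.cast_sub (Finset.card_le_univ _)]
    by_cases hP : ∀ u ∈ A, ∀ w ∈ B, f w - f u ≠ 1
    · simp only [eq_true hP, true_and, if_true, ← Finset.sum_mul]
      rw [hcount, pow_succ]
      field_simp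
    · simp only [eq_false hP, false_and, if_false]; simp

lemma aux_A {V C : Type*} [Fintype V] [Fintype C] [Nonempty C] (r : ℝ) (hr0 : 0 ≤ r) (hr1 : r ≤ 1)
    (K : ℕ) (A : Finset V) (hA : A.card ≤ K) :
    ∑ f : V → C, r ^ (A.image f).card ≤
      (Fintype.card C : ℝ) ^ Fintype.card V * (r + (K : ℝ) / Fintype.card C * (1 - r)) ^ A.card := by
  have hn : (0:ℝ) < Fintype.card C := by exact_mod_cast Fintype.card_pos
  induction A using Finset.induction_on with
  | empty => simp
  | insert v A hv ih =>
    rw [Finset.card_insert_of_notMem hv] at hA ⊢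
    have ih := ih (by omega)
    set q := r + (K : ℝ) / Fintype.card C * (1 - r) with hq
    have hq0 : 0 ≤ q := by
      have : 0 ≤ 1 - r := by linarith
      positivity
    have key : ∑ f : V → C, r ^ ((insert v A).image f).card ≤ q * ∑ f : V → C, r ^ (A.image f).card := by
      refine le_of_mul_le_mul_left ?_ hn
      rw [← aux_resample v, ← mul_assoc, Finset.mul_sum]
      refine Finset.sum_le_sum fun f _ => ?_
      have himg : ∀ c, (insert v A).image (Function.update f v c) = insert c (A.image f) := by
        intro c
        rw [Finset.image_insert, Function.update_self]
        congr 1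
        exact Finset.image_congr fun u hu => Function.update_of_ne (by rintro rfl; exact hv hu) _ _
      simp only [himg]
      have h1 : ∀ c, r ^ (insert c (A.image f)).card =
          r ^ (A.image f).card * (r + (if c ∈ A.image f then 1 - r else 0)) := by
        intro c
        split_ifs with h
        · rw [Finset.insert_eq_of_mem h]; ring
        · rw [Finset.card_insert_of_notMem h]; ring
      simp only [h1, ← Finset.mul_sum]
      rw [mul_comm]
      refine mul_le_mul_of_nonneg_right ?_ (by positivity)
      rw [Finset.sum_add_distrib, Finset.sum_ite_mem, Finset.univ_inter]
      simp only [Finset.sum_const, Finset.card_univ, nsmul_eq_mul]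
      have h2 : ((A.image f).card : ℝ) ≤ K := by
        exact_mod_cast Finset.card_image_le.trans (by omega)
      have : (Fintype.card C : ℝ) * q = Fintype.card C * r + K * (1 - r) := by
        rw [hq]; field_simp
      rw [this]
      have : 0 ≤ 1 - r := by linarith
      gcongr
    refine key.trans ?_
    calc _ ≤ q * _ := mul_le_mul_of_nonneg_left ih hq0
      _ = _ := by ring

lemma aux_count {V C : Type*} [Fintype V] [Fintype C] [Nonempty C] [AddGroup C] [One C]
    (A B : Finset V) (hAB : Disjoint A B) (m : ℕ) (hA : A.card = m) (hB : B.card = m)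
    (hm : 8 * m ≤ Fintype.card C) :
    ((Finset.univ.filter fun f : V → C => ∀ u ∈ A, ∀ v ∈ B, f v - f u ≠ 1).card : ℝ) ≤
      (Fintype.card C : ℝ) ^ Fintype.card V * Real.exp (-((m:ℝ)^2 / (2 * Fintype.card C))) := by
  have hn : (0:ℝ) < Fintype.card C := by exact_mod_cast Fintype.card_pos
  set n : ℝ := (Fintype.card C : ℝ) with hndef
  have hm' : 8 * (m:ℝ) ≤ n := by rw [hndef]; exact_mod_cast hm
  set t : ℝ := m / n with ht
  have ht0 : 0 ≤ t := by positivity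
  have ht8 : t ≤ 1/8 := by rw [ht, div_le_iff₀ hn]; linarith
  set r := Real.exp (-t) with hr
  have hr1 : r ≤ 1 := Real.exp_le_one_iff.2 (by linarith)
  have hr0 : 0 ≤ r := (Real.exp_pos _).le
  have h := aux_B (C := C) A B hAB 0
  simp only [pow_zero, mul_one, Finset.sum_boole, zero_add, hB] at h
  rw [h]
  have h1 : ∑ f : V → C, (1 - ((A.image f).card : ℝ) / n) ^ m ≤ ∑ f : V → C, r ^ (A.image f).card := by
    refine Finset.sum_le_sum fun f _ => ?_
    have hc : ((A.image f).card : ℝ) ≤ n := by rw [hndef]; exact_mod_cast Finset.card_le_univ _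
    have : 0 ≤ 1 - ((A.image f).card : ℝ) / n := by
      rw [sub_nonneg, div_le_one hn]; exact hc
    calc _ ≤ (Real.exp (-(((A.image f).card : ℝ) / n))) ^ m := by
          gcongr; exact Real.one_sub_le_exp_neg _
      _ = _ := by
          rw [hr, ← Real.exp_nat_mul, ← Real.exp_nat_mul]; congr 1; rw [ht]; ring
  refine h1.trans ((aux_A r hr0 hr1 m A hA.le).trans ?_)
  rw [hA]
  refine mul_le_mul_of_nonneg_left ?_ (by positivity)
  have hrt : r * (1 + t) ≤ 1 := by
    have : 1 + t ≤ Real.exp t := by linarith [Real.add_one_le_exp t]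
    calc r * (1+t) ≤ r * Real.exp t := by gcongr
      _ = 1 := by rw [hr, ← Real.exp_add]; simp
  have hbase : r + (m:ℝ) / n * (1 - r) ≤ Real.exp (-(t/2)) := by
    rw [← ht]
    refine le_trans ?_ (Real.one_sub_le_exp_neg _)
    nlinarith
  calc _ ≤ (Real.exp (-(t/2))) ^ m := by
        have : 0 ≤ 1 - r := by linarith
        exact pow_le_pow_left₀ (by positivity) hbase m
    _ = _ := by
        rw [← Real.exp_nat_mul]; congr 1; rw [ht]; field_simp

lemma aux_count' {V C : Type*} [Fintype V] [Fintype C] [Nonempty C] [AddGroup C] [One C]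
    (A B : Finset V) (hAB : Disjoint A B) (m : ℕ) (hA : A.card = m) (hB : B.card = m)
    (hm : 8 * m ≤ Fintype.card C) (X : Finset (V → C))
    (hX : ∀ f ∈ X, ∀ u ∈ A, ∀ v ∈ B, f v - f u ≠ 1) :
    (X.card : ℝ) ≤
      (Fintype.card C : ℝ) ^ Fintype.card V * Real.exp (-((m:ℝ)^2 / (2 * Fintype.card C))) := by
  refine le_trans ?_ (aux_count A B hAB m hA hB hm)
  exact_mod_cast Finset.card_le_card fun f hf => by
    rw [Finset.mem_filter]
    exact ⟨Finset.mem_univ _, hX f hf⟩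

/-- Let `ε ∈ (0,1)`, `V` a finite set of `ν` objects, and `ξ`
an integer with `ν ≤ ξ ≤ 2ν`.  Choose `M` independent uniformly random
colorings `χ₁, …, χ_M : V → ℤ/ξℤ` and connect distinct `u, v` whenever, for
some `i`, `χᵢ(u) − χᵢ(v) ≡ ±1 (mod ξ)`.  If `ν ≥ 640/ε²` and `M ≥ 2600/ε²`,
then with probability at least `1 − exp(−4ν)` the resulting graph is an
`(ε/4)`-connector.  (Probability is modelled by counting colorings.) -/
theorem random_coloring_graph_is_connector
    (ε : ℝ) (hε : 0 < ε) (hε1 : ε < 1)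
    (V : Type*) [Fintype V] (ξ M : ℕ)
    (hξl : Fintype.card V ≤ ξ) (hξu : ξ ≤ 2 * Fintype.card V)
    (hν : (640 : ℝ) / ε ^ 2 ≤ (Fintype.card V : ℝ))
    (hM : (2600 : ℝ) / ε ^ 2 ≤ (M : ℝ)) :
    (1 - Real.exp (-4 * (Fintype.card V : ℝ))) *
        (Nat.card (Fin M → V → ZMod ξ) : ℝ) ≤
      (({χ : Fin M → V → ZMod ξ |
          IsConnector (ε / 4)
            (SimpleGraph.fromRel fun u v =>
              ∃ i : Fin M, χ i u - χ i v = 1 ∨ χ i v - χ i u = 1)}).ncard : ℝ) := by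
  classical
  set ν : ℕ := Fintype.card V with hνdef
  have hε2 : ε ^ 2 < 1 := by nlinarith
  have hε2p : 0 < ε ^ 2 := by positivity
  have hν' : 640 ≤ ε ^ 2 * ν := by rw [div_le_iff₀ hε2p] at hν; linarith
  have hM' : 2600 ≤ ε ^ 2 * M := by rw [div_le_iff₀ hε2p] at hM; linarith
  have hνpos : (0:ℝ) < ν := by
    by_contra h
    have : (ν:ℝ) ≤ 0 := not_lt.1 h
    nlinarith
  have hνposN : 0 < ν := by exact_mod_cast hνpos
  have hεν : 640 ≤ ε * ν := by
    have : ε ^ 2 * ν ≤ ε * ν := by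
      apply mul_le_mul_of_nonneg_right _ hνpos.le
      nlinarith
    linarith
  have : NeZero ξ := ⟨by omega⟩
  have hξpos : (0:ℝ) < ξ := by
    have : 0 < ξ := by omega
    exact_mod_cast this
  have hξu' : (ξ:ℝ) ≤ 2 * ν := by exact_mod_cast hξu
  set m : ℕ := ⌊ε * ν / 8⌋₊ with hm
  have hmle : (m:ℝ) ≤ ε * ν / 8 := Nat.floor_le (by positivity)
  have hmge : ε * ν / 9 ≤ m := by
    have := Nat.lt_floor_add_one (ε * ν / 8)
    rw [← hm] at this
    linarith
  have h8m : 8 * m ≤ ξ := by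
    have h1 : (8:ℝ) * m ≤ ν := by nlinarith
    have h2 : 8 * m ≤ ν := by exact_mod_cast h1
    omega
  set N : ℝ := (ξ:ℝ) ^ ν with hN
  have hNpos : 0 < N := by positivity
  have hcard : (Nat.card (Fin M → V → ZMod ξ) : ℝ) = N ^ M := by
    simp [Nat.card_eq_fintype_card, ZMod.card, hN, hνdef]
  let good : Set (Fin M → V → ZMod ξ) := {χ : Fin M → V → ZMod ξ |
          IsConnector (ε / 4)
            (SimpleGraph.fromRel fun u v =>
              ∃ i : Fin M, χ i u - χ i v = 1 ∨ χ i v - χ i u = 1)}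
  let E : Finset V × Finset V → Finset (Fin M → V → ZMod ξ) := fun p =>
    Fintype.piFinset fun _ : Fin M =>
      Finset.univ.filter fun f : V → ZMod ξ => ∀ u ∈ p.1, ∀ v ∈ p.2, f v - f u ≠ 1
  let P : Finset (Finset V × Finset V) := Finset.univ.filter fun p =>
    Disjoint p.1 p.2 ∧ p.1.card = m ∧ p.2.card = m
  have hsub : goodᶜ ⊆ ((P.biUnion E : Finset _) : Set (Fin M → V → ZMod ξ)) := by
    intro χ hχ
    simp only [good, Set.mem_compl_iff, Set.mem_ofPred_eq, IsConnector, not_forall, not_lt] at hχ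
    obtain ⟨S, hS, hNS⟩ := hχ
    set G := (SimpleGraph.fromRel fun u v =>
              ∃ i : Fin M, χ i u - χ i v = 1 ∨ χ i v - χ i u = 1) with hG
    rw [Nat.card_eq_fintype_card, ← hνdef] at hS hNS
    have hT : ((Nbhd G S)ᶜ.ncard : ℝ) = ν - (Nbhd G S).ncard := by
      have := Set.ncard_add_ncard_compl (Nbhd G S)
      rw [Nat.card_eq_fintype_card, ← hνdef] at this
      rw [← this]; push_cast; ring
    rw [Set.ncard_eq_toFinset_card'] at hS
    have hT2 : ε / 4 * ν ≤ ((Nbhd G S)ᶜ.ncard : ℝ) := by rw [hT]; linarith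
    rw [Set.ncard_eq_toFinset_card'] at hT2
    have hS' : 2 * m ≤ S.toFinset.card := by
      have : (2:ℝ) * m ≤ S.toFinset.card := by linarith
      exact_mod_cast this
    have hT' : 2 * m ≤ (Nbhd G S)ᶜ.toFinset.card := by
      have : (2:ℝ) * m ≤ (Nbhd G S)ᶜ.toFinset.card := by linarith
      exact_mod_cast this
    obtain ⟨A, hAS, hA⟩ := Finset.exists_subset_card_eq (show m ≤ S.toFinset.card by omega)
    have h3 : m ≤ ((Nbhd G S)ᶜ.toFinset \ A).card := by
      have := Finset.le_card_sdiff A (Nbhd G S)ᶜ.toFinset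
      omega
    obtain ⟨B, hBT, hB⟩ := Finset.exists_subset_card_eq h3
    have hdis : Disjoint A B :=
      Finset.disjoint_left.2 fun x hx hx' => (Finset.mem_sdiff.1 (hBT hx')).2 hx
    rw [Finset.mem_coe, Finset.mem_biUnion]
    refine ⟨(A, B), by simp [P, hdis, hA, hB], ?_⟩
    simp only [E, Fintype.mem_piFinset, Finset.mem_filter, Finset.mem_univ, true_and]
    intro i u hu v hv he
    have hvT := (Finset.mem_sdiff.1 (hBT hv)).1
    rw [Set.mem_toFinset] at hvT
    apply hvT
    refine ⟨u, Set.mem_toFinset.1 (hAS hu), ?_⟩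
    rw [hG, SimpleGraph.fromRel_adj]
    refine ⟨?_, Or.inl ⟨i, Or.inl he⟩⟩
    rintro rfl
    exact Finset.disjoint_left.1 hdis hu hv
  have hE : ∀ p ∈ P, ((E p).card : ℝ) ≤ N ^ M * Real.exp (-6 * ν) := by
    rintro ⟨A, B⟩ hp
    simp only [P, Finset.mem_filter, Finset.mem_univ, true_and] at hp
    obtain ⟨hd, hA, hB⟩ := hp
    have hEc : E (A, B) = Fintype.piFinset fun _ : Fin M => 
      Finset.univ.filter fun f : V → ZMod ξ => ∀ u ∈ A, ∀ v ∈ B, f v - f u ≠ 1 := rfl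
    rw [hEc]
    generalize hX : (Finset.univ.filter fun f : V → ZMod ξ =>
      ∀ u ∈ A, ∀ v ∈ B, f v - f u ≠ 1) = X
    have h := aux_count' (C := ZMod ξ) A B hd m hA hB (by rw [ZMod.card]; exact h8m) X
      (fun f hf => by rw [← hX, Finset.mem_filter] at hf; exact hf.2)
    rw [ZMod.card, ← hνdef, ← hN] at h
    rw [Fintype.card_piFinset, Finset.prod_const, Finset.card_univ, Fintype.card_fin, Nat.cast_pow]
    refine (pow_le_pow_left₀ (by positivity) h M).trans ?_
    rw [mul_pow]
    refine mul_le_mul_of_nonneg_left ?_ (by positivity)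
    rw [← Real.exp_nat_mul, Real.exp_le_exp]
    have h4 : ε ^ 2 * ν / 324 ≤ (m:ℝ)^2 / (2 * ξ) := by
      rw [div_le_div_iff₀ (by norm_num) (by positivity)]
      have h5 : (ε * ν / 9)^2 ≤ (m:ℝ)^2 := pow_le_pow_left₀ (by positivity) hmge 2
      have h6 : ε ^ 2 * ν * (2 * ξ) ≤ ε ^ 2 * ν * (2 * (2 * ν)) := by gcongr
      nlinarith
    have h7 : (M:ℝ) * (ε ^ 2 * ν / 324) ≤ M * ((m:ℝ)^2 / (2 * ξ)) := by gcongr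
    have h8 : 2600 * (ν:ℝ) ≤ ε ^ 2 * M * ν := by gcongr
    nlinarith
  have hP : (P.card : ℝ) ≤ Real.exp (2 * ν) := by
    have h1 : P.card ≤ 2 ^ ν * 2 ^ ν := by
      refine (Finset.card_le_univ P).trans ?_
      rw [Fintype.card_prod, Fintype.card_finset]
    have h2 : (P.card : ℝ) ≤ 2 ^ ν * 2 ^ ν := by exact_mod_cast h1
    refine h2.trans ?_
    have h3 : (2:ℝ) ≤ Real.exp 1 := by linarith [Real.add_one_le_exp (1:ℝ)]
    calc (2:ℝ) ^ ν * 2 ^ ν ≤ (Real.exp 1) ^ ν * (Real.exp 1) ^ ν := by gcongr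
      _ = _ := by rw [← Real.exp_nat_mul, ← Real.exp_add]; congr 1; ring
  have hbad : (goodᶜ.ncard : ℝ) ≤ Real.exp (-4 * ν) * N ^ M := by
    have h1 : goodᶜ.ncard ≤ ∑ p ∈ P, (E p).card := by
      refine (Set.ncard_le_ncard hsub (Finset.finite_toSet _)).trans ?_
      rw [Set.ncard_coe_finset]
      exact Finset.card_biUnion_le
    have h2 : (goodᶜ.ncard : ℝ) ≤ ∑ p ∈ P, ((E p).card : ℝ) := by exact_mod_cast h1
    refine h2.trans ((Finset.sum_le_sum hE).trans ?_)
    rw [Finset.sum_const, nsmul_eq_mul]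
    calc (P.card : ℝ) * (N ^ M * Real.exp (-6 * ν))
        ≤ Real.exp (2 * ν) * (N ^ M * Real.exp (-6 * ν)) := by gcongr
      _ = (Real.exp (2 * ν) * Real.exp (-6 * ν)) * N ^ M := by ring
      _ = _ := by rw [← Real.exp_add]; congr 2; ring
  have htot : (good.ncard : ℝ) + goodᶜ.ncard = N ^ M := by
    rw [← hcard]
    exact_mod_cast Set.ncard_add_ncard_compl good
  change _ ≤ (good.ncard : ℝ)
  rw [hcard]
  linarith
end
end

section
/- Let S be a finite set of ν objects, let ξ be an integer with ξ ≥ ν, and let χ : S → {1,…,ξ} be a uniformly random coloring (each element colored independently and uniformly). Let X = |χ(S)| be the number of distinct colors used on S. Then Prob[X < ν/e²] < exp(−ν). -/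
theorem few_colors_count (S : Type*) [Fintype S] (ξ k : ℕ) (hk : k ≤ ξ) :
    ({χ : S → Fin ξ | (Set.range χ).ncard ≤ k}).ncard
      ≤ ξ.choose k * k ^ (Fintype.card S) := by
  classical
  have hsub : {χ : S → Fin ξ | (Set.range χ).ncard ≤ k} ⊆
      (((Finset.univ : Finset (Fin ξ)).powersetCard k).biUnion
        (fun T => Fintype.piFinset (fun _ : S => T)) : Finset (S → Fin ξ)) := by
    intro χ hχ
    have h1 : (Finset.univ.image χ).card ≤ k := by
      have : (Set.range χ).ncard = (Finset.univ.image χ).card := by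
        rw [← Set.ncard_coe_finset]; simp
      rw [← this]; exact hχ
    obtain ⟨T, hT, hTc⟩ := Finset.exists_superset_card_eq h1 (by simpa using hk)
    simp only [Finset.coe_biUnion, Set.mem_iUnion, Finset.mem_coe, Finset.mem_powersetCard,
      Fintype.mem_piFinset]
    exact ⟨T, ⟨Finset.subset_univ _, hTc⟩, fun s => hT (by simp)⟩
  refine (Set.ncard_le_ncard hsub (Finset.finite_toSet _)).trans ?_
  rw [Set.ncard_coe_finset]
  refine (Finset.card_biUnion_le_card_mul _ _ (k ^ Fintype.card S) ?_).trans ?_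
  · intro T hT
    rw [Finset.mem_powersetCard] at hT
    simp [Fintype.card_piFinset, hT.2]
  · simp

/-- Let `S` be a finite set of `ν` objects, `ξ ≥ ν` an
integer, and `χ : S → {1,…,ξ}` a uniformly random coloring.  If `X = |χ(S)|`
is the number of distinct colors used on `S`, then
`Prob[X < ν/e²] < exp(−ν)`.  (Probability is modelled by counting colorings:
the number of colorings in the bad event is less than `exp(−ν)·ξ^ν`.) -/
theorem few_colors_unlikely (S : Type*) [Fintype S] (ξ : ℕ)
    (hξ : Fintype.card S ≤ ξ) :
    (({χ : S → Fin ξ |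
        ((Set.range χ).ncard : ℝ) <
          (Fintype.card S : ℝ) / Real.exp 2}).ncard : ℝ)
      < Real.exp (-(Fintype.card S : ℝ)) * (ξ : ℝ) ^ (Fintype.card S) := by
  rcases Nat.eq_zero_or_pos (Fintype.card S) with h0 | hpos
  · have : {χ : S → Fin ξ | ((Set.range χ).ncard : ℝ) <
          (Fintype.card S : ℝ) / Real.exp 2} = ∅ := by
      ext χ
      simp [h0]
    rw [this, h0]
    simp
  have hcount := few_colors_count S ξ ⌊(Fintype.card S : ℝ) / Real.exp 2⌋₊
  have hsub : {χ : S → Fin ξ | ((Set.range χ).ncard : ℝ) <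
          (Fintype.card S : ℝ) / Real.exp 2} ⊆
      {χ : S → Fin ξ | (Set.range χ).ncard ≤ ⌊(Fintype.card S : ℝ) / Real.exp 2⌋₊} :=
    fun χ hχ => Nat.le_floor (le_of_lt hχ)
  have hle := Set.ncard_le_ncard hsub (Set.toFinite _)
  have hk : (⌊(Fintype.card S : ℝ) / Real.exp 2⌋₊ : ℝ) ≤ (Fintype.card S : ℝ) / Real.exp 2 :=
    Nat.floor_le (by positivity)
  generalize ⌊(Fintype.card S : ℝ) / Real.exp 2⌋₊ = k at *
  generalize Fintype.card S = ν at *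
  have he : (3 : ℝ) ≤ Real.exp 2 := by
    have := Real.add_one_le_exp (2 : ℝ); linarith
  have hν : (0 : ℝ) < ν := by exact_mod_cast hpos
  have hξ' : (ν : ℝ) ≤ ξ := by exact_mod_cast hξ
  have hξ0 : (0 : ℝ) < ξ := lt_of_lt_of_le hν hξ'
  have hk2 : (k : ℝ) * Real.exp 2 ≤ ν := by
    rwa [le_div_iff₀ (Real.exp_pos 2)] at hk
  have hk3 : 3 * (k : ℝ) < ν := by
    rcases Nat.eq_zero_or_pos k with h | h
    · simp [h, hν]
    · have h4 : (3 : ℝ) < Real.exp 2 := by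
        have := Real.add_one_lt_exp (two_ne_zero : (2 : ℝ) ≠ 0); linarith
      have : (0 : ℝ) < k := by exact_mod_cast h
      nlinarith
  have hkν : k ≤ ν := by
    have : (k : ℝ) ≤ ν := by linarith [(Nat.cast_nonneg k : (0 : ℝ) ≤ k)]
    exact_mod_cast this
  have hmain : ((ξ.choose k * k ^ ν : ℕ) : ℝ) < Real.exp (-(ν : ℝ)) * (ξ : ℝ) ^ ν := by
    obtain ⟨m, rfl⟩ := Nat.exists_eq_add_of_le hkν
    have a1 : (ξ.choose k : ℝ) ≤ (ξ : ℝ) ^ k / (k.factorial : ℝ) := Nat.choose_le_pow_div k ξ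
    have a2 : (k : ℝ) ^ k / (k.factorial : ℝ) ≤ Real.exp k :=
      Real.pow_div_factorial_le_exp _ (Nat.cast_nonneg k) k
    have a3 : (k : ℝ) ≤ ξ * Real.exp (-2) := by
      rw [Real.exp_neg, ← div_eq_mul_inv, le_div_iff₀ (Real.exp_pos 2)]
      linarith
    have a4 : (k : ℝ) ^ m ≤ ξ ^ m * Real.exp (-2 * m) := by
      calc (k : ℝ) ^ m ≤ (ξ * Real.exp (-2)) ^ m := by gcongr
        _ = _ := by rw [mul_pow, ← Real.exp_nat_mul]; ring_nf
    push_cast at *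
    calc (ξ.choose k : ℝ) * (k : ℝ) ^ (k + m)
        ≤ ((ξ : ℝ) ^ k / (k.factorial : ℝ)) * (k : ℝ) ^ (k + m) := by gcongr
      _ = (ξ : ℝ) ^ k * ((k : ℝ) ^ k / (k.factorial : ℝ)) * (k : ℝ) ^ m := by
          rw [pow_add]; ring
      _ ≤ (ξ : ℝ) ^ k * Real.exp k * (ξ ^ m * Real.exp (-2 * m)) := by gcongr
      _ = Real.exp (k + -2 * m) * (ξ : ℝ) ^ (k + m) := by
          rw [pow_add, Real.exp_add]; ring
      _ < Real.exp (-((k : ℝ) + m)) * (ξ : ℝ) ^ (k + m) := by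
          gcongr
          linarith
  calc _ ≤ ((ξ.choose k * k ^ ν : ℕ) : ℝ) := by
        exact_mod_cast hle.trans (hcount (hkν.trans hξ))
    _ < _ := hmain
end

section
/- Let S be a finite set of ν objects, let ξ ≥ ν be an integer, and let χ : S → {1,…,ξ} be a uniformly random coloring. Then for any integer t with 1 ≤ t ≤ ν, the probability that the number of distinct colors used satisfies |χ(S)| ≤ t is at most e^t · (t/ξ)^{ν−t}. -/
/-- Let `S` be a finite set of `ν` objects, `ξ ≥ ν` an
integer, and `χ : S → {1,…,ξ}` a uniformly random coloring.  For any integer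
`t` with `1 ≤ t ≤ ν`, the probability that the number of distinct colors used
satisfies `|χ(S)| ≤ t` is at most `e^t·(t/ξ)^{ν−t}`.  (Probability is modelled
by counting: the number of such colorings is at most `e^t·(t/ξ)^{ν−t}·ξ^ν`.) -/
theorem prob_few_distinct_colors (S : Type*) [Fintype S] (ξ t : ℕ)
    (hξ : Fintype.card S ≤ ξ) (ht1 : 1 ≤ t) (ht2 : t ≤ Fintype.card S) :
    (({χ : S → Fin ξ | (Set.range χ).ncard ≤ t}).ncard : ℝ)
      ≤ Real.exp t * ((t : ℝ) / (ξ : ℝ)) ^ (Fintype.card S - t) *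
          (ξ : ℝ) ^ (Fintype.card S) := by
  classical
  have hsub : {χ : S → Fin ξ | (Set.range χ).ncard ≤ t} ⊆
      (((Finset.powersetCard t (Finset.univ : Finset (Fin ξ))).biUnion
        (fun T => Fintype.piFinset (fun _ : S => T)) : Finset (S → Fin ξ)) : Set (S → Fin ξ)) := by
    intro χ hχ
    have h1 : (Finset.univ.image χ).card ≤ t := by
      have h2 : (Set.range χ).ncard ≤ t := hχ
      rw [← Set.ncard_coe_finset]
      simpa using h2
    obtain ⟨T, hT1, hT2, hT3⟩ := Finset.exists_subsuperset_card_eq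
      (Finset.subset_univ (Finset.univ.image χ)) h1 (by simpa using ht2.trans hξ)
    simp only [Finset.coe_biUnion, Set.mem_iUnion]
    refine ⟨T, by simp [hT3], ?_⟩
    simp only [Finset.mem_coe, Fintype.mem_piFinset]
    intro a
    exact hT1 (by simp)
  have hcard : ({χ : S → Fin ξ | (Set.range χ).ncard ≤ t}).ncard
      ≤ ξ.choose t * t ^ Fintype.card S := by
    refine (Set.ncard_le_ncard hsub (Finset.finite_toSet _)).trans ?_
    rw [Set.ncard_coe_finset]
    refine (Finset.card_biUnion_le_card_mul _ _ (t ^ Fintype.card S) ?_).trans ?_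
    · intro T hT
      rw [Finset.mem_powersetCard] at hT
      simp [Fintype.card_piFinset, hT.2]
    · simp
  have hξ0 : (0 : ℝ) < ξ := by exact_mod_cast (by omega : 0 < ξ)
  have hc : (({χ : S → Fin ξ | (Set.range χ).ncard ≤ t}).ncard : ℝ)
      ≤ (ξ.choose t : ℝ) * (t : ℝ) ^ Fintype.card S := by exact_mod_cast hcard
  have h1 : (ξ.choose t : ℝ) ≤ (ξ : ℝ) ^ t / (t.factorial : ℝ) := Nat.choose_le_pow_div t ξ
  have h2 : (t : ℝ) ^ t / (t.factorial : ℝ) ≤ Real.exp t :=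
    Real.pow_div_factorial_le_exp (t : ℝ) (by positivity) t
  obtain ⟨k, hk⟩ := Nat.exists_eq_add_of_le ht2
  rw [hk] at hc ⊢
  rw [Nat.add_sub_cancel_left]
  calc _ ≤ _ := hc
    _ ≤ (ξ : ℝ) ^ t / (t.factorial : ℝ) * (t : ℝ) ^ (t + k) := by gcongr
    _ = ((t : ℝ) ^ t / (t.factorial : ℝ)) * ((t : ℝ) ^ k * (ξ : ℝ) ^ t) := by ring
    _ ≤ Real.exp t * ((t : ℝ) ^ k * (ξ : ℝ) ^ t) := by gcongr
    _ = _ := by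
      rw [div_pow, pow_add]
      field_simp
end

section
/- Let ε ∈ (0,1), let V be a finite set of ν objects with ν ≥ 640/ε², and let ξ be an integer with ν ≤ ξ ≤ 2ν. Let S, T ⊆ V be disjoint sets with |S| ≥ εν/4 and |T| ≥ εν/4. If χ : V → ℤ/ξℤ is a uniformly random coloring, then the probability that there is no pair s ∈ S, t ∈ T with χ(s) − χ(t) ≡ ±1 (mod ξ) is at most exp(−ε²ν/640). -/
open Finset in
lemma aux_sum {Z : Type*} [Fintype Z] [DecidableEq Z] (x : ℝ) (hx : 0 ≤ x) (hx1 : x ≤ 1) (n : ℕ)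
    (hn : 2 * n ≤ Fintype.card Z + 1) :
    ∑ f : Fin n → Z, x ^ (univ.image f).card ≤ ((Fintype.card Z : ℝ) * ((1 + x) / 2)) ^ n := by
  induction n with
  | zero => simp
  | succ n ih =>
    have ih := ih (by omega)
    rw [← (Fin.consEquiv (fun _ : Fin (n+1) => Z)).sum_comp, Fintype.sum_prod_type_right, pow_succ,
      ]
    refine le_trans ?_ (mul_le_mul_of_nonneg_right ih (by positivity))
    rw [Finset.sum_mul]
    refine Finset.sum_le_sum fun f _ => ?_
    have him : ∀ a : Z, univ.image (Fin.consEquiv (fun _ : Fin (n+1) => Z) (a, f))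
        = insert a (univ.image f) := by
      intro a
      ext b
      simp [Fin.consEquiv, Fin.exists_fin_succ, eq_comm]
    simp_rw [him]
    set A := univ.image f with hA
    have hk : A.card ≤ n := by
      simpa using (Finset.card_image_le (s := (univ : Finset (Fin n))) (f := f))
    have hsum : ∑ a : Z, x ^ (insert a A).card
        = x ^ A.card * (A.card + ((Fintype.card Z : ℝ) - A.card) * x) := by
      rw [← Finset.sum_add_sum_compl A]
      rw [Finset.sum_congr rfl (g := fun _ => x ^ A.card)
        (fun a ha => by rw [Finset.insert_eq_of_mem ha])]
      rw [Finset.sum_congr (s₁ := Aᶜ) rfl (g := fun _ => x ^ (A.card + 1))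
        (fun a ha => by rw [Finset.card_insert_of_notMem (by simpa using ha)])]
      rw [sum_const, sum_const, card_compl, nsmul_eq_mul, nsmul_eq_mul,
        Nat.cast_sub (card_le_univ A)]
      ring
    rw [hsum]
    refine mul_le_mul_of_nonneg_left ?_ (by positivity)
    have h2 : 2 * (A.card : ℝ) ≤ Fintype.card Z := by
      have : 2 * A.card ≤ Fintype.card Z := by omega
      exact_mod_cast this
    nlinarith [mul_nonneg (sub_nonneg.2 h2) (sub_nonneg.2 hx1)]

open Finset in
lemma aux_sum' {Z ι : Type*} [Fintype Z] [DecidableEq Z] [Fintype ι] [DecidableEq ι]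
    (x : ℝ) (hx : 0 ≤ x) (hx1 : x ≤ 1)
    (hn : 2 * Fintype.card ι ≤ Fintype.card Z + 1) :
    ∑ f : ι → Z, x ^ (univ.image f).card
      ≤ ((Fintype.card Z : ℝ) * ((1 + x) / 2)) ^ (Fintype.card ι) := by
  refine le_trans (le_of_eq ?_) (aux_sum (Z := Z) x hx hx1 _ hn)
  refine Fintype.sum_equiv ((Fintype.equivFin ι).arrowCongr (Equiv.refl Z)) _ _ fun f => ?_
  congr 2
  ext b
  simp only [mem_image, mem_univ, true_and, Equiv.arrowCongr_apply, Function.comp, Equiv.refl_apply]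
  exact ((Fintype.equivFin ι).symm.surjective.exists (p := fun i => f i = b))

open Finset in
lemma aux_core {V Z : Type*} [Fintype Z] [DecidableEq Z] [Fintype V] [DecidableEq V]
    (e : Z → Z) (he : Function.Injective e) (hZ : 0 < Fintype.card Z)
    (S T : Finset V) (hST : Disjoint S T) (hS : 2 * S.card ≤ Fintype.card Z)
    (hT : T.card ≤ Fintype.card Z) :
    ((univ.filter fun χ : V → Z => ∀ s ∈ S, ∀ t ∈ T, χ t ≠ e (χ s)).card : ℝ)
      ≤ Real.exp (-((S.card : ℝ) * T.card / (4 * Fintype.card Z)))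
        * (Fintype.card Z : ℝ) ^ Fintype.card V := by
  set ξ : ℝ := (Fintype.card Z : ℝ) with hξ
  have hξ0 : 0 < ξ := by rw [hξ]; exact_mod_cast hZ
  set l : ℝ := T.card / ξ with hl
  have hl0 : 0 ≤ l := by positivity
  have hl1 : l ≤ 1 := by
    rw [hl, div_le_one hξ0, hξ]; exact_mod_cast hT
  set x := Real.exp (-l) with hx
  have hx0 : 0 ≤ x := (Real.exp_pos _).le
  have hx1 : x ≤ 1 := by rw [hx]; exact Real.exp_le_one_iff.2 (by linarith)
  have hx2 : x ≤ 1 - l / 2 := by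
    have h1 : x * Real.exp l = 1 := by rw [hx, ← Real.exp_add]; simp
    have h2 := Real.add_one_le_exp l
    nlinarith [mul_nonneg hx0 (sub_nonneg.2 h2)]
  have hx3 : (1 + x) / 2 ≤ Real.exp (-(l / 4)) := by
    have := Real.add_one_le_exp (-(l/4)); linarith
  let R := {v : V // v ∉ S}
  let G : ({v : V // v ∈ S} → Z) → R → Finset Z := fun f r =>
    if r.1 ∈ T then (univ.image fun i => e (f i))ᶜ else univ
  have h1 : (univ.filter fun χ : V → Z => ∀ s ∈ S, ∀ t ∈ T, χ t ≠ e (χ s)).card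
      ≤ ∑ f : {v : V // v ∈ S} → Z, (Fintype.piFinset (G f)).card := by
    rw [← Finset.card_sigma]
    refine Finset.card_le_card_of_injOn (fun χ => ⟨fun i => χ i.1, fun r => χ r.1⟩) ?_ ?_
    · intro χ hχ
      simp only [coe_filter, mem_univ, true_and, Set.mem_ofPred_eq] at hχ
      simp only [coe_sigma, Set.mem_sigma_iff, coe_univ, Set.mem_univ, true_and, mem_coe,
        Fintype.mem_piFinset, G]
      intro r
      split_ifs with hr
      · simp only [mem_compl, mem_image, mem_univ, true_and, not_exists]
        intro i hi
        exact hχ i.1 i.2 r.1 hr hi.symm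
      · simp
    · intro χ _ χ' _ h
      simp only [Sigma.mk.injEq] at h
      obtain ⟨h1, h2⟩ := h
      have h2 := eq_of_heq h2
      funext v
      by_cases hv : v ∈ S
      · exact congrFun h1 ⟨v, hv⟩
      · exact congrFun h2 ⟨v, hv⟩
  have hcardR : Fintype.card V = S.card + Fintype.card R := by
    have : Fintype.card R = Fintype.card V - S.card := by
      simp [R, Fintype.card_subtype_compl]
    have := card_le_univ S
    omega
  have h2 : ∀ f : {v : V // v ∈ S} → Z, ((Fintype.piFinset (G f)).card : ℝ)
      ≤ ξ ^ (Fintype.card R) * x ^ (univ.image f).card := by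
    intro f
    set k := (univ.image f).card with hk
    have hk' : (univ.image fun i => e (f i)).card = k := by
      rw [hk, ← Finset.card_image_of_injective (univ.image f) he, Finset.image_image]; rfl
    have hb : ∀ r : R, ((G f r).card : ℝ) ≤ ξ * (if r.1 ∈ T then Real.exp (-(k / ξ)) else 1) := by
      intro r
      simp only [G]
      split_ifs with hr
      · rw [card_compl, hk', Nat.cast_sub (by rw [← hk']; exact card_le_univ _)]
        have := Real.add_one_le_exp (-(k/ξ))
        calc ξ - k = ξ * (-(k/ξ) + 1) := by field_simp; ring
          _ ≤ _ := by gcongr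
      · simp [hξ]
    rw [Fintype.card_piFinset, Nat.cast_prod]
    refine (Finset.prod_le_prod (fun _ _ => by positivity) (fun r _ => hb r)).trans ?_
    rw [Finset.prod_mul_distrib, prod_const, card_univ]
    refine mul_le_mul_of_nonneg_left (le_of_eq ?_) (by positivity)
    rw [Finset.prod_ite, prod_const, prod_const_one, mul_one]
    have hc : (univ.filter fun r : R => r.1 ∈ T).card = T.card := by
      refine Finset.card_bij (fun r _ => r.1) ?_ ?_ ?_
      · intro r hr; simpa using hr
      · intro a _ b _ h; exact Subtype.ext h
      · intro b hb
        exact ⟨⟨b, fun h => Finset.disjoint_left.1 hST h hb⟩, by simpa using hb, rfl⟩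
    rw [hc, hx, ← Real.exp_nat_mul, ← Real.exp_nat_mul, hl]
    congr 1
    ring
  have hS' : Fintype.card {v : V // v ∈ S} = S.card := by simp
  have h3 := aux_sum' (Z := Z) (ι := {v : V // v ∈ S}) x hx0 hx1 (by rw [hS']; omega)
  rw [hS'] at h3
  calc ((univ.filter fun χ : V → Z => ∀ s ∈ S, ∀ t ∈ T, χ t ≠ e (χ s)).card : ℝ)
      ≤ ∑ f : {v : V // v ∈ S} → Z, ((Fintype.piFinset (G f)).card : ℝ) := by exact_mod_cast h1
    _ ≤ ∑ f : {v : V // v ∈ S} → Z, ξ ^ (Fintype.card R) * x ^ (univ.image f).card :=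
        Finset.sum_le_sum fun f _ => h2 f
    _ ≤ ξ ^ (Fintype.card R) * (ξ * ((1 + x) / 2)) ^ S.card := by
        rw [← Finset.mul_sum]; gcongr
    _ ≤ ξ ^ (Fintype.card R) * (ξ * Real.exp (-(l / 4))) ^ S.card := by gcongr
    _ = _ := by
        rw [mul_pow, ← Real.exp_nat_mul, hcardR, pow_add]
        have : (S.card : ℝ) * -(l / 4) = -((S.card : ℝ) * T.card / (4 * ξ)) := by
          rw [hl]; field_simp
        rw [this]; ring


/-- Let `ε ∈ (0,1)`, `V` a finite set of `ν ≥ 640/ε²`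
objects, and `ξ` an integer with `ν ≤ ξ ≤ 2ν`.  Let `S, T ⊆ V` be disjoint
sets each of size at least `εν/4`.  If `χ : V → ℤ/ξℤ` is a uniformly random
coloring, then the probability that there is no pair `s ∈ S`, `t ∈ T` with
`χ(s) − χ(t) ≡ ±1 (mod ξ)` is at most `exp(−ε²ν/640)`.  (Probability is
modelled by counting colorings.) -/
theorem prob_sets_not_connected
    (ε : ℝ) (hε : 0 < ε) (hε1 : ε < 1)
    (V : Type*) [Fintype V] (ξ : ℕ)
    (hν : (640 : ℝ) / ε ^ 2 ≤ (Fintype.card V : ℝ))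
    (hξl : Fintype.card V ≤ ξ) (hξu : ξ ≤ 2 * Fintype.card V)
    (S T : Finset V) (hST : Disjoint S T)
    (hS : ε * (Fintype.card V : ℝ) / 4 ≤ (S.card : ℝ))
    (hT : ε * (Fintype.card V : ℝ) / 4 ≤ (T.card : ℝ)) :
    (({χ : V → ZMod ξ |
        ∀ s ∈ S, ∀ t ∈ T, χ s - χ t ≠ 1 ∧ χ t - χ s ≠ 1}).ncard : ℝ)
      ≤ Real.exp (-(ε ^ 2 * (Fintype.card V : ℝ) / 640)) *
          (ξ : ℝ) ^ (Fintype.card V) := by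
  classical
  have hνpos : (0 : ℝ) < Fintype.card V := lt_of_lt_of_le (by positivity) hν
  have hνn : 0 < Fintype.card V := by exact_mod_cast hνpos
  have hξ0 : 0 < ξ := by omega
  have : NeZero ξ := ⟨hξ0.ne'⟩
  have hle : S.card + T.card ≤ Fintype.card V := by
    rw [← Finset.card_union_of_disjoint hST]; exact Finset.card_le_univ _
  have hξr : (0 : ℝ) < ξ := by exact_mod_cast hξ0
  have hξu' : (ξ : ℝ) ≤ 2 * Fintype.card V := by exact_mod_cast hξu
  have hnum : Real.exp (-((S.card : ℝ) * T.card / (4 * ξ))) ≤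
      Real.exp (-(ε ^ 2 * (Fintype.card V : ℝ) / 640)) := by
    apply Real.exp_le_exp.2
    apply neg_le_neg
    rw [le_div_iff₀ (by positivity)]
    have h1 : (ε * (Fintype.card V : ℝ) / 4) * (ε * (Fintype.card V : ℝ) / 4)
        ≤ (S.card : ℝ) * T.card := mul_le_mul hS hT (by positivity) (by positivity)
    have h2 : ε ^ 2 * (Fintype.card V : ℝ) / 640 * (4 * ξ)
        ≤ ε ^ 2 * (Fintype.card V : ℝ) / 640 * (4 * (2 * Fintype.card V)) := by gcongr
    have h3 : 0 ≤ ε ^ 2 * (Fintype.card V : ℝ) ^ 2 := by positivity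
    nlinarith
  have hcard : Fintype.card (ZMod ξ) = ξ := ZMod.card ξ
  have hinj : Function.Injective (fun z : ZMod ξ => z - 1) := sub_left_injective
  refine le_trans ?_ (mul_le_mul_of_nonneg_right hnum (by positivity))
  rcases le_total S.card T.card with h | h
  · have := aux_core (fun z : ZMod ξ => z - 1) hinj (by omega) S T hST (by omega) (by omega)
    rw [hcard] at this
    refine le_trans ?_ this
    rw [← Set.ncard_coe_finset]
    refine Nat.cast_le.2 ?_
    refine Set.ncard_le_ncard ?_ (Set.toFinite _)
    intro χ hχ
    simp only [Finset.coe_filter, Finset.mem_univ, true_and, Set.mem_ofPred_eq] at hχ ⊢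
    intro s hs t ht heq
    exact (hχ s hs t ht).1 (by rw [heq]; ring)
  · have := aux_core (fun z : ZMod ξ => z - 1) hinj (by omega) T S hST.symm (by omega) (by omega)
    rw [hcard, mul_comm (T.card : ℝ)] at this
    refine le_trans ?_ this
    rw [← Set.ncard_coe_finset]
    refine Nat.cast_le.2 ?_
    refine Set.ncard_le_ncard ?_ (Set.toFinite _)
    intro χ hχ
    simp only [Finset.coe_filter, Finset.mem_univ, true_and, Set.mem_ofPred_eq] at hχ ⊢
    intro t ht s hs heq
    exact (hχ s hs t ht).2 (by rw [heq]; ring)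
end

section
/- There is a universal constant C > 0 such that for every finite set D of n distinct disks in the plane and every integer k ≥ 1, the number of unordered pairs {d₁, d₂} of distinct disks of D for which there exists a point p ∈ d₁ ∩ d₂ with depth_D(p) ≤ k (that is, the number of k-shallow edges of the intersection graph) is at most C·n·k. -/
open Metric Set
open scoped Classical

noncomputable section

/-- Height at abscissa `x` of the line through points `i` and `j`. -/
def lh {ι : Type} (X Y : ι → ℝ) (i j : ι) (x : ℝ) : ℝ :=
  Y i + (Y j - Y i) / (X j - X i) * (x - X i)

theorem lh_left {ι : Type} (X Y : ι → ℝ) (i j : ι) : lh X Y i j (X i) = Y i := by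
  simp [lh]

theorem lh_right {ι : Type} (X Y : ι → ℝ) (i j : ι) (h : X i < X j) :
    lh X Y i j (X j) = Y j := by
  have : X j - X i ≠ 0 := by linarith
  unfold lh
  field_simp
  ring

theorem lh_swap {ι : Type} (X Y : ι → ℝ) (i j : ι) (h : X i < X j) (x : ℝ) :
    lh X Y j i x = lh X Y i j x := by
  have : X j - X i ≠ 0 := by linarith
  have : X i - X j ≠ 0 := by linarith
  unfold lh
  field_simp
  ring

theorem lh_neg {ι : Type} (X Y : ι → ℝ) (i j : ι) (x : ℝ) :
    lh (fun a => - X a) Y i j (-x) = lh X Y i j x := by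
  unfold lh
  have h1 : (-X j - -X i) = -(X j - X i) := by ring
  have h2 : (-x - -X i) = -(x - X i) := by ring
  rw [h1, h2, div_neg]
  ring

theorem lh_zero {ι : Type} (X Y : ι → ℝ) (i j k l : ι) (x0 x1 : ℝ)
    (h0 : lh X Y i j x0 ≤ lh X Y k l x0) (h1 : lh X Y k l x1 < lh X Y i j x1) :
    ∃ t : ℝ, 0 ≤ t ∧ t < 1 ∧ lh X Y i j (x0 + t * (x1 - x0)) = lh X Y k l (x0 + t * (x1 - x0)) := by
  set A := lh X Y k l x0 - lh X Y i j x0 with hA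
  set B := lh X Y i j x1 - lh X Y k l x1 with hB
  have hA0 : 0 ≤ A := by linarith
  have hB0 : 0 < B := by linarith
  refine ⟨A / (A + B), by positivity, by rw [div_lt_one (by linarith)]; linarith, ?_⟩
  have key : ∀ t, lh X Y i j (x0 + t * (x1 - x0)) - lh X Y k l (x0 + t * (x1 - x0))
      = - A + t * (A + B) := by
    intro t
    rw [hA, hB]; unfold lh; ring
  have := key (A / (A + B))
  rw [div_mul_cancel₀ _ (by linarith)] at this
  linarith

/-- zero to the left of `x1` -/
theorem lh_zero_left {ι : Type} (X Y : ι → ℝ) (i j k l : ι) (x0 x1 : ℝ) (hx : x0 < x1)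
    (h0 : lh X Y i j x0 ≤ lh X Y k l x0) (h1 : lh X Y k l x1 < lh X Y i j x1) :
    ∃ x : ℝ, x0 ≤ x ∧ x < x1 ∧ lh X Y i j x = lh X Y k l x := by
  obtain ⟨t, h0, h1, h⟩ := lh_zero X Y i j k l x0 x1 h0 h1
  exact ⟨_, by nlinarith, by nlinarith, h⟩

/-- Noncrossing edges. -/
structure NC {ι : Type} (X Y : ι → ℝ) (S : Finset ι) (E : Finset (ι × ι)) : Prop where
  inj : ∀ i j, X i = X j → i = j
  lt : ∀ i j, (i, j) ∈ E → X i < X j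
  meml : ∀ i j, (i, j) ∈ E → i ∈ S
  memr : ∀ i j, (i, j) ∈ E → j ∈ S
  nc : ∀ i j k l, (i, j) ∈ E → (k, l) ∈ E → ∀ x, X i ≤ x → x ≤ X j → X k ≤ x → x ≤ X l →
    lh X Y i j x = lh X Y k l x → (i = k ∧ j = l) ∨
      ((x = X i ∨ x = X j) ∧ (x = X k ∨ x = X l))

def Charge {ι : Type} (X Y : ι → ℝ) (S : Finset ι) (E : Finset (ι × ι)) (u v z : ι) : Prop :=
  z ∈ S ∧ X u < X z ∧ X z < X v ∧ lh X Y u v (X z) < Y z ∧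
    ∀ a b, (a, b) ∈ E → X a < X z → X z < X b →
      lh X Y u v (X z) < lh X Y a b (X z) → lh X Y a b (X z) < Y z → False

theorem NC.mirror {ι : Type} {X Y : ι → ℝ} {S : Finset ι} {E : Finset (ι × ι)}
    (H : NC X Y S E) : NC (fun a => - X a) Y S (E.image Prod.swap) := by
  have hm : ∀ i j, (i, j) ∈ E.image Prod.swap ↔ (j, i) ∈ E := by
    intro i j; simp
  refine ⟨fun i j h => H.inj i j (by simpa using h), ?_, ?_, ?_, ?_⟩
  · intro i j h
    have := H.lt j i ((hm i j).1 h); simpa using this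
  · intro i j h; exact H.memr _ _ ((hm i j).1 h)
  · intro i j h; exact H.meml _ _ ((hm i j).1 h)
  · intro i j k l hij hkl x h1 h2 h3 h4 he
    rw [hm] at hij hkl
    have hx : x = - (-x) := by ring
    rw [hx, lh_neg, lh_neg, lh_swap X Y j i (H.lt _ _ hij), lh_swap X Y l k (H.lt _ _ hkl)] at he
    rcases H.nc j i l k hij hkl (-x) (by linarith) (by linarith) (by linarith) (by linarith) he with h | ⟨h, h'⟩
    · exact Or.inl ⟨h.2, h.1⟩
    · refine Or.inr ⟨?_, ?_⟩
      · rcases h with h | h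
        · right; linarith
        · left; linarith
      · rcases h' with h | h
        · right; linarith
        · left; linarith

theorem Charge.mirror {ι : Type} {X Y : ι → ℝ} {S : Finset ι} {E : Finset (ι × ι)}
    (H : NC X Y S E) {u v z : ι} (huv : X u < X v)
    (h : Charge (fun a => - X a) Y S (E.image Prod.swap) v u z) : Charge X Y S E u v z := by
  obtain ⟨h1, h2, h3, h4, h5⟩ := h
  simp only [lh_neg] at h4 h5
  rw [lh_swap X Y u v huv] at h4 h5
  refine ⟨h1, by linarith, by linarith, h4, ?_⟩
  intro a b hab ha hb h6 h7
  rw [← lh_swap X Y a b (H.lt _ _ hab)] at h6 h7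
  exact h5 b a (by simpa using hab) (by linarith) (by linarith) h6 h7

theorem lh_slope {ι : Type} (X Y : ι → ℝ) (u v w : ι) (x x' : ℝ) (hx : X u < x) (hx' : X u < x')
    (h : lh X Y u v x < lh X Y u w x) : lh X Y u v x' < lh X Y u w x' := by
  unfold lh at *
  have : (Y v - Y u) / (X v - X u) < (Y w - Y u) / (X w - X u) := by
    by_contra hc
    push Not at hc
    nlinarith
  nlinarith

theorem caseA {ι : Type} {X Y : ι → ℝ} {S : Finset ι} {E : Finset (ι × ι)}
    (H : NC X Y S E) {u v w : ι} (huv : (u, v) ∈ E) (huw : (u, w) ∈ E)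
    (hlt : X w < X v) (hup : ∀ x, X u < x → lh X Y u v x < lh X Y u w x)
    (hmin : ∀ b, (u, b) ∈ E → ∀ x, X u < x → lh X Y u v x < lh X Y u b x →
      lh X Y u w x ≤ lh X Y u b x) :
    ∃ z, Charge X Y S E u v z := by
  have hxuw := H.lt _ _ huw
  have hxuv := H.lt _ _ huv
  let T : Finset ι := S.filter (fun z => X u < X z ∧ X z ≤ X w ∧ lh X Y u v (X z) < Y z ∧
    Y z ≤ lh X Y u w (X z))
  have hT : w ∈ T := by
    simp only [T, Finset.mem_filter]
    refine ⟨H.memr _ _ huw, hxuw, le_rfl, ?_, ?_⟩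
    · have := hup _ hxuw
      rwa [lh_right X Y u w hxuw] at this
    · rw [lh_right X Y u w hxuw]
  obtain ⟨z, hz, hleft⟩ := T.exists_min_image X ⟨_, hT⟩
  simp only [T, Finset.mem_filter] at hz hleft
  obtain ⟨hzS, hz1, hz2, hz3, hz4⟩ := hz
  refine ⟨z, hzS, hz1, by linarith, hz3, ?_⟩
  intro a b hab ha hb h1 h2
  have h2' : lh X Y a b (X z) < lh X Y u w (X z) := by linarith
  have hxab := H.lt _ _ hab
  rcases lt_trichotomy (X a) (X u) with hau | hau | hau
  · rcases le_total (lh X Y a b (X u)) (Y u) with ht | ht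
    · obtain ⟨x, hx1, hx2, hx⟩ := lh_zero_left X Y a b u v (X u) (X z) hz1
        (by rw [lh_left]; exact ht) h1
      rcases H.nc a b u v hab huv x (by linarith) (by linarith) hx1 (by linarith) hx with
        ⟨h, -⟩ | ⟨h | h, -⟩
      · rw [h] at hau; linarith
      · linarith
      · linarith
    · obtain ⟨x, hx1, hx2, hx⟩ := lh_zero_left X Y u w a b (X u) (X z) hz1
        (by rw [lh_left]; exact ht) h2'
      rcases H.nc a b u w hab huw x (by linarith) (by linarith) hx1 (by linarith) hx.symm with
        ⟨h, -⟩ | ⟨h | h, -⟩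
      · rw [h] at hau; linarith
      · linarith
      · linarith
  · have := H.inj _ _ hau
    subst this
    have := hmin b hab _ hz1 h1
    linarith
  · have ha1 : lh X Y u v (X a) < Y a := by
      by_contra hc
      push Not at hc
      obtain ⟨x, hx1, hx2, hx⟩ := lh_zero_left X Y a b u v (X a) (X z) ha
        (by rw [lh_left]; exact hc) h1
      rcases H.nc a b u v hab huv x (by linarith) (by linarith) (by linarith) (by linarith) hx with
        ⟨h, -⟩ | ⟨h, h' | h'⟩
      · rw [h] at hau; linarith
      · linarith
      · linarith
    have ha2 : Y a ≤ lh X Y u w (X a) := by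
      by_contra hc
      push Not at hc
      obtain ⟨x, hx1, hx2, hx⟩ := lh_zero_left X Y u w a b (X a) (X z) ha
        (by rw [lh_left]; exact hc.le) h2'
      rcases H.nc a b u w hab huw x (by linarith) (by linarith) (by linarith) (by linarith) hx.symm with
        ⟨h, -⟩ | ⟨h, h' | h'⟩
      · rw [h] at hau; linarith
      · linarith
      · linarith
    have := hleft a ⟨H.meml _ _ hab, hau, by linarith, ha1, ha2⟩
    linarith

def NotTop {ι : Type} (X Y : ι → ℝ) (E : Finset (ι × ι)) (u v : ι) : Prop :=
  ∃ w, (u, w) ∈ E ∧ lh X Y u v (X v) < lh X Y u w (X v)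

theorem exists_next {ι : Type} {X Y : ι → ℝ} {S : Finset ι} {E : Finset (ι × ι)}
    (H : NC X Y S E) {u v : ι} (huv : (u, v) ∈ E) (h : NotTop X Y E u v) :
    ∃ w, (u, w) ∈ E ∧ (∀ x, X u < x → lh X Y u v x < lh X Y u w x) ∧
    (∀ b, (u, b) ∈ E → ∀ x, X u < x → lh X Y u v x < lh X Y u b x →
      lh X Y u w x ≤ lh X Y u b x) := by
  obtain ⟨w, huw, hup⟩ := h
  have hxuv := H.lt _ _ huv
  let F : Finset (ι × ι) := E.filter (fun e => e.1 = u ∧ lh X Y u v (X v) < lh X Y u e.2 (X v))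
  have hF : (u, w) ∈ F := by simp [F, huw, hup]
  obtain ⟨⟨u', w'⟩, hmem, hmin⟩ := F.exists_min_image (fun e => lh X Y u e.2 (X v)) ⟨_, hF⟩
  simp only [F, Finset.mem_filter] at hmem hmin
  obtain ⟨hE', rfl, hup'⟩ := hmem
  refine ⟨w', hE', fun x hx => lh_slope X Y _ _ _ _ _ hxuv hx hup', ?_⟩
  intro b hb x hx hlt
  by_contra hc
  push Not at hc
  have h1 := hmin (u', b) ⟨hb, rfl, lh_slope X Y _ _ _ _ _ hx hxuv hlt⟩
  have h2 := lh_slope X Y _ _ _ _ _ hx hxuv hc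
  simp only at h1
  linarith

theorem exists_charge {ι : Type} {X Y : ι → ℝ} {S : Finset ι} {E : Finset (ι × ι)}
    (H : NC X Y S E) {u v : ι} (huv : (u, v) ∈ E) (h : NotTop X Y E u v)
    (h' : NotTop (fun a => - X a) Y (E.image Prod.swap) v u) :
    ∃ z, Charge X Y S E u v z := by
  have hxuv := H.lt _ _ huv
  have hvu : (v, u) ∈ E.image Prod.swap := by simpa using huv
  obtain ⟨w, hw1, hw2, hw3⟩ := exists_next H huv h
  obtain ⟨z, hz1, hz2, hz3⟩ := exists_next H.mirror hvu h'
  have hzv : (z, v) ∈ E := by simpa using hz1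
  have hxuw := H.lt _ _ hw1
  have hxzv := H.lt _ _ hzv
  rcases lt_trichotomy (X w) (X v) with hc | hc | hc
  · exact caseA H huv hw1 hc hw2 hw3
  · have := H.inj _ _ hc
    subst this
    exact absurd (hw2 _ hxuv) (lt_irrefl _)
  rcases lt_trichotomy (X u) (X z) with hd | hd | hd
  · obtain ⟨y, hy⟩ := caseA H.mirror hvu hz1 (by linarith) hz2 hz3
    exact ⟨y, hy.mirror H hxuv⟩
  · have := H.inj _ _ hd
    subst this
    exact absurd (hz2 (- X u) (by linarith)) (lt_irrefl _)
  exfalso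
  have e1 : lh X Y u w (X u) < lh X Y z v (X u) := by
    have := hz2 (- X u) (by linarith)
    rw [lh_neg, lh_neg, lh_swap X Y u v hxuv, lh_swap X Y z v hxzv, lh_left] at this
    rwa [lh_left]
  have e2 : lh X Y z v (X v) < lh X Y u w (X v) := by
    have := hw2 (X v) hxuv
    rw [lh_right X Y u v hxuv] at this
    rwa [lh_right X Y z v hxzv]
  obtain ⟨x, hx1, hx2, hx⟩ := lh_zero_left X Y u w z v (X u) (X v) hxuv e1.le e2
  rcases H.nc u w z v hw1 hzv x hx1 (by linarith) (by linarith) hx2.le hx with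
        ⟨h, -⟩ | ⟨h1 | h1, h2 | h2⟩
  · rw [h] at hd; linarith
  all_goals linarith

theorem card_top {ι : Type} {X Y : ι → ℝ} {S : Finset ι} {E : Finset (ι × ι)}
    (H : NC X Y S E) : (E.filter (fun e => ¬ NotTop X Y E e.1 e.2)).card ≤ S.card := by
  apply Finset.card_le_card_of_injOn Prod.fst
  · rintro ⟨a, b⟩ h
    simp only [Finset.coe_filter, Set.mem_ofPred_eq] at h
    exact H.meml _ _ h.1
  · rintro ⟨a, b⟩ h ⟨a', b'⟩ h' heq
    simp only [Finset.coe_filter, Set.mem_ofPred_eq] at h h' heq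
    subst heq
    obtain ⟨h1, h2⟩ := h
    obtain ⟨h3, h4⟩ := h'
    have hb := H.lt _ _ h1
    have hb' := H.lt _ _ h3
    have h5 : lh X Y a b' (X b) ≤ lh X Y a b (X b) := by
      by_contra hc
      exact h2 ⟨b', h3, by push Not at hc; exact hc⟩
    have h6 : lh X Y a b (X b') ≤ lh X Y a b' (X b') := by
      by_contra hc
      exact h4 ⟨b, h1, by push Not at hc; exact hc⟩
    have key : ∀ x, X a < x → lh X Y a b x = lh X Y a b' x := by
      intro x hx
      apply le_antisymm
      · by_contra hc
        push Not at hc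
        have := lh_slope X Y _ _ _ _ (X b') hx hb' hc
        linarith
      · by_contra hc
        push Not at hc
        have := lh_slope X Y _ _ _ _ (X b) hx hb hc
        linarith
    have hm : X a < min (X b) (X b') := lt_min hb hb'
    have m1 := min_le_left (X b) (X b')
    have m2 := min_le_right (X b) (X b')
    set m := min (X b) (X b')
    rcases H.nc a b a b' h1 h3 ((X a + m) / 2) (by linarith) (by linarith) (by linarith)
      (by linarith) (key _ (by linarith)) with ⟨-, h⟩ | ⟨h | h, -⟩
    · rw [h]
    · linarith
    · linarith

theorem NC.card_le {ι : Type} {X Y : ι → ℝ} {S : Finset ι} {E : Finset (ι × ι)}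
    (H : NC X Y S E) : E.card ≤ 3 * S.card := by
  have t1 := card_top H
  have t2 := card_top H.mirror
  set E1 := E.filter (fun e => ¬ NotTop X Y E e.1 e.2)
  set E2 := (E.image Prod.swap).filter
    (fun e => ¬ NotTop (fun a => - X a) Y (E.image Prod.swap) e.1 e.2)
  set E3 := E.filter (fun e => ∃ z, Charge X Y S E e.1 e.2 z)
  have t3 : E3.card ≤ S.card := by
    have hch : ∀ e : ι × ι, ∃ z, e ∈ E3 → Charge X Y S E e.1 e.2 z := by
      intro e
      by_cases he : e ∈ E3
      · obtain ⟨z, hz⟩ := (Finset.mem_filter.1 he).2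
        exact ⟨z, fun _ => hz⟩
      · exact ⟨e.1, fun h => absurd h he⟩
    choose f hf using hch
    apply Finset.card_le_card_of_injOn f
    · intro e he
      exact (hf e he).1
    · rintro ⟨a, b⟩ h ⟨c, d⟩ h' heq
      have c1 := hf _ h
      have c2 := hf _ h'
      rw [← heq] at c2
      generalize f (a, b) = z at c1 c2
      have hab := (Finset.mem_filter.1 h).1
      have hcd := (Finset.mem_filter.1 h').1
      obtain ⟨-, p1, p2, p3, p4⟩ := c1
      obtain ⟨-, q1, q2, q3, q4⟩ := c2
      simp only at *
      rcases lt_trichotomy (lh X Y a b (X z)) (lh X Y c d (X z)) with hl | hl | hl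
      · exact (p4 c d hcd q1 q2 hl q3).elim
      · rcases H.nc a b c d hab hcd _ p1.le p2.le q1.le q2.le hl with ⟨h1, h2⟩ | ⟨h1 | h1, -⟩
        · rw [h1, h2]
        · linarith
        · linarith
      · exact (q4 a b hab p1 p2 hl p3).elim
  have hsub : E ⊆ E1 ∪ (E2.image Prod.swap ∪ E3) := by
    rintro ⟨u, v⟩ huv
    by_cases h1 : NotTop X Y E u v
    · by_cases h2 : NotTop (fun a => - X a) Y (E.image Prod.swap) v u
      · refine Finset.mem_union_right _ (Finset.mem_union_right _ ?_)
        exact Finset.mem_filter.2 ⟨huv, exists_charge H huv h1 h2⟩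
      · refine Finset.mem_union_right _ (Finset.mem_union_left _ ?_)
        refine Finset.mem_image.2 ⟨(v, u), Finset.mem_filter.2 ⟨?_, h2⟩, rfl⟩
        exact Finset.mem_image.2 ⟨(u, v), huv, rfl⟩
    · exact Finset.mem_union_left _ (Finset.mem_filter.2 ⟨huv, h1⟩)
  have c1 := Finset.card_le_card hsub
  have c2 := Finset.card_union_le E1 (E2.image Prod.swap ∪ E3)
  have c3 := Finset.card_union_le (E2.image Prod.swap) E3
  have c4 := Finset.card_image_le (s := E2) (f := Prod.swap)
  omega

theorem conv_lt {a b c d s t : ℝ} (h1 : a < c) (h2 : a < d) (h3 : b < c) (h4 : b < d)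
    (hs : 0 ≤ s) (hs' : s ≤ 1) (ht : 0 ≤ t) (ht' : t ≤ 1) :
    (1 - s) * a + s * b < (1 - t) * c + t * d := by
  have hM : max a b < min c d := max_lt (lt_min h1 h2) (lt_min h3 h4)
  have e1 := le_max_left a b
  have e2 := le_max_right a b
  have e3 := min_le_left c d
  have e4 := min_le_right c d
  set M := max a b
  set m := min c d
  have f1 : (1 - s) * a + s * b ≤ M := by nlinarith
  have f2 : m ≤ (1 - t) * c + t * d := by nlinarith
  linarith

theorem nc_of_generic {ι : Type} (X Y w : ι → ℝ) (S : Finset ι) (E : Finset (ι × ι))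
    (hX : ∀ i j, X i = X j → i = j)
    (hcol : ∀ i j k, i ≠ j → i ≠ k → j ≠ k →
      (Y j - Y i) * (X k - X i) ≠ (Y k - Y i) * (X j - X i))
    (hlt : ∀ i j, (i, j) ∈ E → X i < X j)
    (hE : ∀ i j, (i, j) ∈ E → i ∈ S ∧ j ∈ S ∧ ∃ p q : ℝ, ∀ l ∈ S, l ≠ i → l ≠ j →
      w i - 2 * (X i * p + Y i * q) < w l - 2 * (X l * p + Y l * q) ∧
      w j - 2 * (X j * p + Y j * q) < w l - 2 * (X l * p + Y l * q)) :
    NC X Y S E := by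
  have hcol' : ∀ i j k x, X i ≠ X j → X i ≠ X k → j ≠ k → lh X Y i j x = lh X Y i k x → x = X i := by
    intro i j k x hij hik hjk h
    by_contra hne
    apply hcol i j k (fun h => hij (by rw [h])) (fun h => hik (by rw [h])) hjk
    unfold lh at h
    have e1 : X j - X i ≠ 0 := sub_ne_zero.2 (Ne.symm hij)
    have e2 : X k - X i ≠ 0 := sub_ne_zero.2 (Ne.symm hik)
    have e3 : x - X i ≠ 0 := sub_ne_zero.2 hne
    have h' : (Y j - Y i) / (X j - X i) = (Y k - Y i) / (X k - X i) :=
      mul_right_cancel₀ e3 (by linarith)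
    rwa [div_eq_div_iff e1 e2] at h'
  refine ⟨hX, hlt, fun i j h => (hE i j h).1, fun i j h => (hE i j h).2.1, ?_⟩
  intro i j k l hij hkl x h1 h2 h3 h4 he
  have hxij := hlt _ _ hij
  have hxkl := hlt _ _ hkl
  by_cases hik : i = k
  · subst hik
    by_cases hjl : j = l
    · exact Or.inl ⟨rfl, hjl⟩
    · have := hcol' i j l x hxij.ne hxkl.ne hjl he
      exact Or.inr ⟨Or.inl this, Or.inl this⟩
  by_cases hjl : j = l
  · subst hjl
    rw [← lh_swap X Y i j hxij, ← lh_swap X Y k j hxkl] at he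
    have := hcol' j i k x hxij.ne' hxkl.ne' hik he
    exact Or.inr ⟨Or.inr this, Or.inr this⟩
  by_cases hil : i = l
  · subst hil
    have : x = X i := le_antisymm h4 h1
    exact Or.inr ⟨Or.inl this, Or.inr this⟩
  by_cases hjk : j = k
  · subst hjk
    have : x = X j := le_antisymm h2 h3
    exact Or.inr ⟨Or.inr this, Or.inl this⟩
  exfalso
  obtain ⟨iS, jS, p, q, hp⟩ := hE i j hij
  obtain ⟨kS, lS, p', q', hp'⟩ := hE k l hkl
  have a1 := hp k kS (Ne.symm hik) (Ne.symm hjk)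
  have a2 := hp l lS (Ne.symm hil) (Ne.symm hjl)
  have a3 := hp' i iS hik hil
  have a4 := hp' j jS hjk hjl
  have d1 : 0 < X j - X i := by linarith
  have d2 : 0 < X l - X k := by linarith
  obtain ⟨s, hs⟩ : ∃ s, s = (x - X i) / (X j - X i) := ⟨_, rfl⟩
  obtain ⟨t, ht⟩ : ∃ t, t = (x - X k) / (X l - X k) := ⟨_, rfl⟩
  have s0 : 0 ≤ s := by rw [hs]; exact div_nonneg (by linarith) d1.le
  have s1 : s ≤ 1 := by rw [hs, div_le_one d1]; linarith
  have t0 : 0 ≤ t := by rw [ht]; exact div_nonneg (by linarith) d2.le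
  have t1 : t ≤ 1 := by rw [ht, div_le_one d2]; linarith
  have xs : x = (1 - s) * X i + s * X j := by
    have : s * (X j - X i) = x - X i := by rw [hs]; exact div_mul_cancel₀ _ d1.ne'
    linarith
  have xt : x = (1 - t) * X k + t * X l := by
    have : t * (X l - X k) = x - X k := by rw [ht]; exact div_mul_cancel₀ _ d2.ne'
    linarith
  have ys : lh X Y i j x = (1 - s) * Y i + s * Y j := by
    rw [hs]; unfold lh; ring
  have yt : lh X Y k l x = (1 - t) * Y k + t * Y l := by
    rw [ht]; unfold lh; ring
  have c1 := conv_lt a1.1 a2.1 a1.2 a2.2 s0 s1 t0 t1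
  have c2 := conv_lt a3.1 a4.1 a3.2 a4.2 t0 t1 s0 s1
  have ex : (1 - s) * X i + s * X j = (1 - t) * X k + t * X l := by rw [← xs, ← xt]
  have ey : (1 - s) * Y i + s * Y j = (1 - t) * Y k + t * Y l := by rw [← ys, ← yt, he]
  have k1 : ((1 - s) * X i + s * X j) * (p - p') = ((1 - t) * X k + t * X l) * (p - p') := by rw [ex]
  have k2 : ((1 - s) * Y i + s * Y j) * (q - q') = ((1 - t) * Y k + t * Y l) * (q - q') := by rw [ey]
  linarith

theorem ev_ne (a b c : ℝ) (h : b ≠ 0 ∨ c ≠ 0) :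
    ∀ᶠ ε in nhdsWithin (0 : ℝ) {0}ᶜ, a + b * ε + c * ε ^ 2 ≠ 0 := by
  apply nhdsNE_le_cofinite
  let P : Polynomial ℝ := Polynomial.C a + Polynomial.C b * Polynomial.X
    + Polynomial.C c * Polynomial.X ^ 2
  have hP : P ≠ 0 := by
    intro h0
    have h1 : P.coeff 1 = 0 := by rw [h0]; simp
    have h2 : P.coeff 2 = 0 := by rw [h0]; simp
    simp [P, Polynomial.coeff_C] at h1 h2
    tauto
  have := Polynomial.finite_setOfPred_isRoot hP
  refine this.subset ?_
  intro x hx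
  simp at hx
  simp [P, Polynomial.IsRoot, hx]

theorem geo {ι : Type} [Fintype ι] (A B w : ι → ℝ) (S : Finset ι) (G : Finset (ι × ι))
    (hG : ∀ i j, (i, j) ∈ G → i ∈ S ∧ j ∈ S ∧ i ≠ j ∧ ∃ p q : ℝ, ∀ l ∈ S, l ≠ i → l ≠ j →
      w i - 2 * (A i * p + B i * q) < w l - 2 * (A l * p + B l * q) ∧
      w j - 2 * (A j * p + B j * q) < w l - 2 * (A l * p + B l * q)) :
    G.card ≤ 6 * S.card := by
  have hG' : ∀ e : ι × ι, ∃ p q : ℝ, e ∈ G → ∀ l ∈ S, l ≠ e.1 → l ≠ e.2 →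
      w e.1 - 2 * (A e.1 * p + B e.1 * q) < w l - 2 * (A l * p + B l * q) ∧
      w e.2 - 2 * (A e.2 * p + B e.2 * q) < w l - 2 * (A l * p + B l * q) := by
    rintro ⟨i, j⟩
    by_cases h : (i, j) ∈ G
    · obtain ⟨-, -, -, p, q, h⟩ := hG i j h
      exact ⟨p, q, fun _ => h⟩
    · exact ⟨0, 0, fun h' => absurd h' h⟩
  choose p q hpq using hG'
  obtain ⟨t, ht⟩ : ∃ t : ι → ℝ, ∀ i j, t i = t j → i = j := by
    refine ⟨fun i => ((Fintype.equivFin ι i : ℕ) : ℝ), fun i j h => ?_⟩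
    simp only at h
    have : (Fintype.equivFin ι i : ℕ) = Fintype.equivFin ι j := by exact_mod_cast h
    exact (Fintype.equivFin ι).injective (Fin.ext this)
  have ev1 : ∀ᶠ ε in nhdsWithin (0 : ℝ) {0}ᶜ, ∀ i j, i ≠ j → A i + ε * t i ≠ A j + ε * t j := by
    rw [Filter.eventually_all]; intro i
    rw [Filter.eventually_all]; intro j
    by_cases hij : i = j
    · simp [hij]
    have := ev_ne (A i - A j) (t i - t j) 0 (Or.inl (sub_ne_zero.2 fun h => hij (ht _ _ h)))
    filter_upwards [this] with ε hε _ h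
    apply hε
    linarith
  have ev2 : ∀ᶠ ε in nhdsWithin (0 : ℝ) {0}ᶜ, ∀ i j k, i ≠ j → i ≠ k → j ≠ k →
      ((B j + ε * t j ^ 2) - (B i + ε * t i ^ 2)) * ((A k + ε * t k) - (A i + ε * t i)) ≠
      ((B k + ε * t k ^ 2) - (B i + ε * t i ^ 2)) * ((A j + ε * t j) - (A i + ε * t i)) := by
    rw [Filter.eventually_all]; intro i
    rw [Filter.eventually_all]; intro j
    rw [Filter.eventually_all]; intro k
    by_cases hij : i = j
    · simp [hij]
    by_cases hik : i = k
    · simp [hik]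
    by_cases hjk : j = k
    · simp [hjk]
    have h1 : t j - t i ≠ 0 := sub_ne_zero.2 fun h => hij (ht _ _ h.symm)
    have h2 : t k - t i ≠ 0 := sub_ne_zero.2 fun h => hik (ht _ _ h.symm)
    have h3 : t j - t k ≠ 0 := sub_ne_zero.2 fun h => hjk (ht _ _ h)
    have := ev_ne ((B j - B i) * (A k - A i) - (B k - B i) * (A j - A i))
      ((B j - B i) * (t k - t i) + (t j ^ 2 - t i ^ 2) * (A k - A i)
        - (B k - B i) * (t j - t i) - (t k ^ 2 - t i ^ 2) * (A j - A i))
      ((t j - t i) * (t k - t i) * (t j - t k))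
      (Or.inr (mul_ne_zero (mul_ne_zero h1 h2) h3))
    filter_upwards [this] with ε hε _ _ _ h
    apply hε
    linear_combination h
  have ev3 : ∀ᶠ ε in nhdsWithin (0 : ℝ) {0}ᶜ, ∀ e : ι × ι, ∀ l m : ι,
      w m - 2 * (A m * p e + B m * q e) < w l - 2 * (A l * p e + B l * q e) →
      w m - 2 * ((A m + ε * t m) * p e + (B m + ε * t m ^ 2) * q e)
        < w l - 2 * ((A l + ε * t l) * p e + (B l + ε * t l ^ 2) * q e) := by
    apply Filter.Eventually.filter_mono nhdsWithin_le_nhds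
    rw [Filter.eventually_all]; intro e
    rw [Filter.eventually_all]; intro l
    rw [Filter.eventually_all]; intro m
    by_cases h : w m - 2 * (A m * p e + B m * q e) < w l - 2 * (A l * p e + B l * q e)
    · have c1 : Continuous (fun ε : ℝ =>
        w m - 2 * ((A m + ε * t m) * p e + (B m + ε * t m ^ 2) * q e)) := by fun_prop
      have c2 : Continuous (fun ε : ℝ =>
        w l - 2 * ((A l + ε * t l) * p e + (B l + ε * t l ^ 2) * q e)) := by fun_prop
      have := (isOpen_lt c1 c2).mem_nhds (x := 0) (by simpa using h)
      filter_upwards [this] with ε hε _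
      exact hε
    · exact Filter.Eventually.of_forall fun _ h' => absurd h' h
  obtain ⟨ε, h1, h2, h3⟩ := (ev1.and (ev2.and ev3)).exists
  let X : ι → ℝ := fun i => A i + ε * t i
  let Y : ι → ℝ := fun i => B i + ε * t i ^ 2
  have hX : ∀ i j, X i = X j → i = j := fun i j h => by
    by_contra hc
    exact h1 i j hc h
  let E1 := G.filter (fun e => X e.1 < X e.2)
  let E2 := (G.filter (fun e => X e.2 < X e.1)).image Prod.swap
  have N1 : NC X Y S E1 := by
    refine nc_of_generic X Y w S E1 hX h2 ?_ ?_
    · intro i j h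
      exact (Finset.mem_filter.1 h).2
    · intro i j h
      have hg := (Finset.mem_filter.1 h).1
      refine ⟨(hG i j hg).1, (hG i j hg).2.1, p (i, j), q (i, j), ?_⟩
      intro l hl hli hlj
      have := hpq (i, j) hg l hl hli hlj
      exact ⟨h3 _ _ _ this.1, h3 _ _ _ this.2⟩
  have hE2 : ∀ i j, (i, j) ∈ E2 → (j, i) ∈ G ∧ X i < X j := by
    intro i j h
    simpa [E2] using h
  have N2 : NC X Y S E2 := by
    refine nc_of_generic X Y w S E2 hX h2 ?_ ?_
    · intro i j h
      exact (hE2 i j h).2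
    · intro i j h
      have hg := (hE2 i j h).1
      refine ⟨(hG j i hg).2.1, (hG j i hg).1, p (j, i), q (j, i), ?_⟩
      intro l hl hli hlj
      have := hpq (j, i) hg l hl hlj hli
      exact ⟨h3 _ _ _ this.2, h3 _ _ _ this.1⟩
  have b1 := N1.card_le
  have b2 := N2.card_le
  have hsub : G ⊆ E1 ∪ E2.image Prod.swap := by
    rintro ⟨i, j⟩ h
    rcases lt_trichotomy (X i) (X j) with hl | hl | hl
    · exact Finset.mem_union_left _ (Finset.mem_filter.2 ⟨h, hl⟩)
    · exact absurd (hX _ _ hl) (hG i j h).2.2.1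
    · refine Finset.mem_union_right _ ?_
      simp [E2, h, hl]
  have c1 := Finset.card_le_card hsub
  have c2 := Finset.card_union_le E1 (E2.image Prod.swap)
  have c4 := Finset.card_image_le (s := E2) (f := Prod.swap)
  omega

theorem count_pair {ι α : Type} [Fintype ι] [Fintype α] (o : α) (k : ℕ)
    (hq : Fintype.card α = 2 * k) (hk : 1 ≤ k) (i j : ι) (hij : i ≠ j) (P : Finset ι)
    (hi : i ∈ P) (hj : j ∈ P) (hP : P.card ≤ k) :
    ((2 * k : ℕ) : ℝ) ^ Fintype.card ι ≤ 2 * ((2 * k : ℕ) : ℝ) ^ 2 *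
      (((Finset.univ : Finset (ι → α)).filter
        (fun χ => χ i = o ∧ χ j = o ∧ ∀ l ∈ P, l ≠ i → l ≠ j → χ l ≠ o)).card : ℝ) := by
  set q : ℝ := ((2 * k : ℕ) : ℝ) with hqd
  have hk' : (1 : ℝ) ≤ k := by exact_mod_cast hk
  have hq2 : q = 2 * k := by rw [hqd]; push_cast; ring
  have hq0 : 0 < q := by rw [hq2]; linarith
  let s : ι → Finset α := fun l => if l = i ∨ l = j then {o} else
    if l ∈ P then Finset.univ.erase o else Finset.univ
  let g : ι → ℝ := fun l => if l = i ∨ l = j then 1 / q else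
    if l ∈ P then 1 - 1 / q else 1
  have hset : ((Finset.univ : Finset (ι → α)).filter
        (fun χ => χ i = o ∧ χ j = o ∧ ∀ l ∈ P, l ≠ i → l ≠ j → χ l ≠ o))
      = Fintype.piFinset s := by
    ext χ
    simp only [Finset.mem_filter, Finset.mem_univ, true_and, Fintype.mem_piFinset, s]
    constructor
    · rintro ⟨h1, h2, h3⟩ l
      split_ifs with ha hb
      · rcases ha with rfl | rfl <;> simp [h1, h2]
      · push Not at ha
        simp [h3 l hb ha.1 ha.2]
      · simp
    · intro h
      refine ⟨by simpa using h i, by simpa using h j, ?_⟩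
      intro l hl h1 h2
      have := h l
      simpa [h1, h2, hl] using this
  have hcard : ∀ l, ((s l).card : ℝ) = q * g l := by
    intro l
    simp only [s, g]
    split_ifs
    · simp; field_simp
    · rw [Finset.card_erase_of_mem (Finset.mem_univ _), Finset.card_univ, hq,
        Nat.cast_sub (by omega)]
      field_simp
      simp [hqd]
    · rw [Finset.card_univ, hq]; simp [hqd]
  rw [hset, Fintype.card_piFinset]
  push_cast
  simp_rw [hcard]
  rw [Finset.prod_mul_distrib, Finset.prod_const, Finset.card_univ]
  have hg1 : ∏ l, g l = ∏ l ∈ P, g l := by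
    symm
    apply Finset.prod_subset (Finset.subset_univ _)
    intro l _ hl
    have h1 : l ≠ i := fun h => hl (h ▸ hi)
    have h2 : l ≠ j := fun h => hl (h ▸ hj)
    simp [g, h1, h2, hl]
  have hg2 : ∏ l ∈ P, g l = 1 / q * (1 / q * (1 - 1 / q) ^ ((P.erase i).erase j).card) := by
    rw [← Finset.mul_prod_erase P g hi,
      ← Finset.mul_prod_erase (P.erase i) g (Finset.mem_erase.2 ⟨hij.symm, hj⟩)]
    have : ∏ l ∈ (P.erase i).erase j, g l = ∏ l ∈ (P.erase i).erase j, (1 - 1 / q) := by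
      apply Finset.prod_congr rfl
      intro l hl
      simp only [Finset.mem_erase] at hl
      simp [g, hl.1, hl.2.1, hl.2.2]
    rw [this, Finset.prod_const]
    simp [g]
  rw [hg1, hg2]
  set c := ((P.erase i).erase j).card with hc
  have hck : c ≤ k := ((Finset.card_erase_le).trans Finset.card_erase_le).trans hP
  have hbern := one_add_mul_le_pow (a := -(1 / q)) (by
    have : 1 / q ≤ 1 := by rw [div_le_one hq0]; linarith
    linarith) c
  have hhalf : (1 : ℝ) / 2 ≤ (1 - 1 / q) ^ c := by
    have h1 : (c : ℝ) * (1 / q) ≤ 1 / 2 := by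
      have : (c : ℝ) ≤ k := by exact_mod_cast hck
      rw [mul_one_div, div_le_iff₀ hq0]; linarith
    have : 1 + -(1 / q) = 1 - 1 / q := by ring
    rw [this] at hbern
    linarith
  have hpow : 0 < q ^ Fintype.card ι := by positivity
  have e : 2 * q ^ 2 * (q ^ Fintype.card ι * (1 / q * (1 / q * (1 - 1 / q) ^ c)))
      = q ^ Fintype.card ι * (2 * (1 - 1 / q) ^ c) := by
    field_simp
  rw [e]
  nlinarith

theorem count_one {ι α : Type} [Fintype ι] [Fintype α] (o : α) (i : ι) :
    (Fintype.card α) * ((Finset.univ : Finset (ι → α)).filter (fun χ => χ i = o)).card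
      = Fintype.card α ^ Fintype.card ι := by
  let s : ι → Finset α := fun l => if l = i then {o} else Finset.univ
  have hset : ((Finset.univ : Finset (ι → α)).filter (fun χ => χ i = o))
      = Fintype.piFinset s := by
    ext χ
    simp only [Finset.mem_filter, Finset.mem_univ, true_and, Fintype.mem_piFinset, s]
    constructor
    · intro h l
      split_ifs with ha
      · simp [ha, h]
      · simp
    · intro h
      simpa using h i
  rw [hset, Fintype.card_piFinset, ← Finset.mul_prod_erase Finset.univ _ (Finset.mem_univ i)]
  have : ∏ l ∈ Finset.univ.erase i, (s l).card = ∏ l ∈ Finset.univ.erase i, Fintype.card α := by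
    apply Finset.prod_congr rfl
    intro l hl
    simp only [Finset.mem_erase] at hl
    simp [s, hl.1]
  rw [this, Finset.prod_const, Finset.card_erase_of_mem (Finset.mem_univ i), Finset.card_univ]
  have hpos : 0 < Fintype.card ι := Fintype.card_pos_iff.2 ⟨i⟩
  obtain ⟨m, hm⟩ : ∃ m, Fintype.card ι = m + 1 := ⟨_, (Nat.succ_pred_eq_of_pos hpos).symm⟩
  rw [hm]
  simp [s, pow_succ, mul_comm]

theorem clarkson_shor {ι : Type} [Fintype ι] (G : Finset (ι × ι)) (P : ι × ι → Finset ι) (k : ℕ)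
    (hk : 1 ≤ k)
    (hG : ∀ e ∈ G, e.1 ≠ e.2 ∧ e.1 ∈ P e ∧ e.2 ∈ P e ∧ (P e).card ≤ k)
    (hS : ∀ S : Finset ι, (G.filter (fun e => e.1 ∈ S ∧ e.2 ∈ S ∧
      ∀ l ∈ P e, l ≠ e.1 → l ≠ e.2 → l ∉ S)).card ≤ 6 * S.card) :
    (G.card : ℝ) ≤ 24 * Fintype.card ι * k := by
  obtain ⟨α, _, o, hα⟩ : ∃ (α : Type) (_ : Fintype α) (_ : α), Fintype.card α = 2 * k :=
    ⟨Fin (2 * k), inferInstance, ⟨0, by omega⟩, Fintype.card_fin _⟩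
  set n := Fintype.card ι with hn
  set q : ℝ := ((2 * k : ℕ) : ℝ) with hq
  have hk' : (1 : ℝ) ≤ k := by exact_mod_cast hk
  have hq2 : q = 2 * k := by rw [hq]; push_cast; ring
  have hq0 : 0 < q := by rw [hq2]; linarith
  let R : (ι × ι) → (ι → α) → Prop := fun e χ =>
    χ e.1 = o ∧ χ e.2 = o ∧ ∀ l ∈ P e, l ≠ e.1 → l ≠ e.2 → χ l ≠ o
  have dc1 : ∑ e ∈ G, ((Finset.univ : Finset (ι → α)).filter (fun χ => R e χ)).card
      = ∑ χ : ι → α, (G.filter (fun e => R e χ)).card := by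
    exact Finset.sum_card_bipartiteAbove_eq_sum_card_bipartiteBelow R
  have dc2 : ∑ i : ι, ((Finset.univ : Finset (ι → α)).filter (fun χ => χ i = o)).card
      = ∑ χ : ι → α, ((Finset.univ : Finset ι).filter (fun i => χ i = o)).card := by
    exact Finset.sum_card_bipartiteAbove_eq_sum_card_bipartiteBelow
      (fun (i : ι) (χ : ι → α) => χ i = o)
  have hle : ∑ χ : ι → α, (G.filter (fun e => R e χ)).card ≤
      ∑ χ : ι → α, 6 * ((Finset.univ : Finset ι).filter (fun i => χ i = o)).card := by
    apply Finset.sum_le_sum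
    intro χ _
    have := hS ((Finset.univ : Finset ι).filter (fun i => χ i = o))
    simpa [R] using this
  rw [← Finset.mul_sum, ← dc1, ← dc2] at hle
  have hle' : (∑ e ∈ G, (((Finset.univ : Finset (ι → α)).filter (fun χ => R e χ)).card : ℝ)) ≤
      6 * ∑ i : ι, (((Finset.univ : Finset (ι → α)).filter (fun χ => χ i = o)).card : ℝ) := by
    exact_mod_cast hle
  have one : ∀ i : ι, (((Finset.univ : Finset (ι → α)).filter (fun χ => χ i = o)).card : ℝ)
      = q ^ n / q := by
    intro i
    have h := count_one (α := α) o i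
    rw [hα] at h
    rw [eq_div_iff hq0.ne', hq, mul_comm]
    exact_mod_cast h
  have two : ∀ e ∈ G, q ^ n / (2 * q ^ 2) ≤
      (((Finset.univ : Finset (ι → α)).filter (fun χ => R e χ)).card : ℝ) := by
    intro e he
    obtain ⟨h1, h2, h3, h4⟩ := hG e he
    have h := count_pair (α := α) o k hα hk e.1 e.2 h1 (P e) h2 h3 h4
    rw [div_le_iff₀ (by positivity), mul_comm]
    exact h
  have s1 := Finset.card_nsmul_le_sum G _ _ two
  rw [nsmul_eq_mul] at s1
  simp only [one, Finset.sum_const, Finset.card_univ, nsmul_eq_mul] at hle'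
  have fin := s1.trans hle'
  have hpow : 0 < q ^ n := by positivity
  have e1 : (G.card : ℝ) = (G.card * (q ^ n / (2 * q ^ 2))) * (2 * q ^ 2 / q ^ n) := by
    field_simp
  have e2 : 24 * (n : ℝ) * k = (6 * (n * (q ^ n / q))) * (2 * q ^ 2 / q ^ n) := by
    have : (k : ℝ) = q / 2 := by linarith
    rw [this]
    field_simp
    ring
  rw [e1, e2]
  exact mul_le_mul_of_nonneg_right fin (by positivity)

theorem mem_ball_iff (c p : Plane) (r : ℝ) (hr : 0 < r) : p ∈ Metric.closedBall c r ↔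
    ((c 0) ^ 2 + (c 1) ^ 2 - r ^ 2) - 2 * (c 0 * p 0 + c 1 * p 1) ≤ - ((p 0) ^ 2 + (p 1) ^ 2) := by
  rw [Metric.mem_closedBall, EuclideanSpace.dist_eq, Real.sqrt_le_left hr.le]
  simp only [Fin.sum_univ_two, Real.dist_eq, sq_abs]
  constructor <;> intro h <;> nlinarith

/-- There is a universal constant `C > 0` such that for every
finite set `D` of `n` distinct disks in the plane and every integer `k ≥ 1`,
the number of unordered pairs `{d₁, d₂}` of distinct disks of `D` admitting a
point `p ∈ d₁ ∩ d₂` of depth at most `k` (the `k`-shallow edges of the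
intersection graph) is at most `C·n·k`. -/
theorem shallow_edges_count :
    ∃ C : ℝ, 0 < C ∧
      ∀ (D : Finset (Set Plane)), (∀ d ∈ D, IsDisk d) →
      ∀ k : ℕ, 1 ≤ k →
      (({e : Sym2 (Set Plane) | ∃ d₁ d₂ : Set Plane, e = s(d₁, d₂) ∧
          d₁ ∈ D ∧ d₂ ∈ D ∧ d₁ ≠ d₂ ∧
          ∃ p : Plane, p ∈ d₁ ∩ d₂ ∧ diskDepth D p ≤ k}).ncard : ℝ)
        ≤ C * D.card * k := by
  refine ⟨24, by norm_num, ?_⟩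
  intro D hD k hk
  let ι : Type := {d // d ∈ D}
  have hD' : ∀ d : ι, ∃ (c : Plane) (r : ℝ), 0 < r ∧ d.1 = Metric.closedBall c r :=
    fun d => hD d.1 d.2
  choose c r hr hcr using hD'
  have hw : ∀ e : ι × ι, ∃ p : Plane, (∃ p : Plane, p ∈ e.1.1 ∩ e.2.1 ∧ diskDepth D p ≤ k) →
      p ∈ e.1.1 ∩ e.2.1 ∧ diskDepth D p ≤ k := by
    intro e
    by_cases h : ∃ p : Plane, p ∈ e.1.1 ∩ e.2.1 ∧ diskDepth D p ≤ k
    · obtain ⟨p, hp⟩ := h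
      exact ⟨p, fun _ => hp⟩
    · exact ⟨0, fun h' => absurd h' h⟩
  choose p hp using hw
  let G : Finset (ι × ι) := Finset.univ.filter (fun e => e.1 ≠ e.2 ∧
    ∃ p : Plane, p ∈ e.1.1 ∩ e.2.1 ∧ diskDepth D p ≤ k)
  let P : ι × ι → Finset ι := fun e => Finset.univ.filter (fun l => p e ∈ l.1)
  have hGm : ∀ e ∈ G, e.1 ≠ e.2 ∧ p e ∈ e.1.1 ∧ p e ∈ e.2.1 ∧ diskDepth D (p e) ≤ k := by
    intro e he
    have h := (Finset.mem_filter.1 he).2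
    have h2 := hp e h.2
    exact ⟨h.1, h2.1.1, h2.1.2, h2.2⟩
  have key : (G.card : ℝ) ≤ 24 * Fintype.card ι * k := by
    apply clarkson_shor G P k hk
    · intro e he
      obtain ⟨h1, h2, h3, h4⟩ := hGm e he
      refine ⟨h1, by simp [P, h2], by simp [P, h3], ?_⟩
      refine le_trans ?_ h4
      unfold diskDepth
      rw [← Set.ncard_coe_finset, ← Set.ncard_image_of_injective _ Subtype.val_injective]
      apply Set.ncard_le_ncard
      · rintro _ ⟨l, hl, rfl⟩
        have : p e ∈ l.1 := (Finset.mem_filter.1 (Finset.mem_coe.1 hl)).2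
        exact ⟨l.2, this⟩
      · exact (D.finite_toSet).subset fun d hd => hd.1
    · intro S
      apply geo (fun i => c i 0) (fun i => c i 1) (fun i => (c i 0) ^ 2 + (c i 1) ^ 2 - (r i) ^ 2)
      intro i j hij
      simp only [Finset.mem_filter] at hij
      obtain ⟨hg, hi, hj, hl⟩ := hij
      obtain ⟨h1, h2, h3, -⟩ := hGm _ hg
      refine ⟨hi, hj, h1, p (i, j) 0, p (i, j) 1, ?_⟩
      intro l hlS hli hlj
      have hnot : p (i, j) ∉ l.1 := by
        intro hc
        exact hl l (by simp [P, hc]) hli hlj hlS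
      simp only at h2 h3
      rw [hcr, mem_ball_iff _ _ _ (hr _)] at h2 h3 hnot
      push Not at hnot
      exact ⟨by linarith, by linarith⟩
  have hcardι : Fintype.card ι = D.card := Fintype.card_coe D
  rw [hcardι] at key
  refine le_trans ?_ key
  norm_cast
  have hsub : {e : Sym2 (Set Plane) | ∃ d₁ d₂ : Set Plane, e = s(d₁, d₂) ∧
          d₁ ∈ D ∧ d₂ ∈ D ∧ d₁ ≠ d₂ ∧
          ∃ p : Plane, p ∈ d₁ ∩ d₂ ∧ diskDepth D p ≤ k}
      ⊆ (fun e : ι × ι => s(e.1.1, e.2.1)) '' (G : Set (ι × ι)) := by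
    rintro _ ⟨d₁, d₂, rfl, h1, h2, hne, hex⟩
    refine ⟨(⟨d₁, h1⟩, ⟨d₂, h2⟩), ?_, rfl⟩
    refine Finset.mem_coe.2 (Finset.mem_filter.2 ⟨Finset.mem_univ _, ?_, hex⟩)
    intro h
    exact hne (congrArg Subtype.val h)
  refine (Set.ncard_le_ncard hsub (G.finite_toSet.image _)).trans ?_
  refine (Set.ncard_image_le G.finite_toSet).trans ?_
  rw [Set.ncard_coe_finset]
end
end
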